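/- Let (a_n)_{n≥1} be a sequence of complex numbers with ∑_{n=1}^∞ |a_n| < ∞, and define f(x) = ∑_{n=1}^∞ (a_n / sinh(πn/2)) · Im[J_{in/2}(x)²] for x > 0 (this series converges absolutely for each x > 0). Then for every n ≥ 1 the integral ∫₀^∞ Ω_n(x) f(x) dx converges absolutely and a_n = sinh(πn) · ∫₀^∞ Ω_n(x) f(x) dx, where Ω_n(x) = ∫₀^π (x·K₀ˢ(2x·cosh u) − 1/(π·cosh u)) · sinh(2u) · sin(nu) du. -/

import Mathlib

open MeasureTheory Filter Topology

/-- Bessel function of the first kind of complex order `ν` at real `x > 0`. -/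
noncomputable def besselJ (ν : ℂ) (x : ℝ) : ℂ :=
  ∑' k : ℕ, ((-1 : ℂ) ^ k * Complex.exp ((ν + 2 * k) * (Real.log (x / 2) : ℂ))) /
    ((Nat.factorial k : ℂ) * Complex.Gamma (ν + k + 1))

/-- Bessel function of the second kind of complex order `ν` at real `x > 0`. -/
noncomputable def besselY (ν : ℂ) (x : ℝ) : ℂ :=
  (besselJ ν x * Complex.cos (Real.pi * ν) - besselJ (-ν) x) / Complex.sin (Real.pi * ν)

/-- Bessel function of the first kind of order `0` (real-valued). -/
noncomputable def besselJ0 (x : ℝ) : ℝ :=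
  ∑' k : ℕ, (-1 : ℝ) ^ k * (x / 2) ^ (2 * k) / (Nat.factorial k : ℝ) ^ 2

/-- Lommel function `S_{-1,0}` for `x > 0`. -/
noncomputable def lommelS (x : ℝ) : ℝ :=
  ∫ t in Set.Ioi (0 : ℝ), t * Real.exp (-x * Real.sinh t)

/-- Struve function `K₀` for `x > 0`. -/
noncomputable def struveK0 (x : ℝ) : ℝ :=
  (2 / Real.pi) * ∫ t in Set.Ioi (0 : ℝ), Real.exp (-x * Real.sinh t)

/-- Bessel function of the second kind of order `0` (real-valued, for `x > 0`). -/
noncomputable def besselY0 (x : ℝ) : ℝ :=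
  (2 / Real.pi) * ((Real.log (x / 2) + Real.eulerMascheroniConstant) * besselJ0 x +
    ∑' k : ℕ, (-1 : ℝ) ^ k * ((harmonic (k + 1) : ℚ) : ℝ) * (x / 2) ^ (2 * (k + 1)) /
      (Nat.factorial (k + 1) : ℝ) ^ 2)

/-- Struve function `H₀`: `H₀ = K₀ˢ + Y₀`. -/
noncomputable def struveH0 (x : ℝ) : ℝ := struveK0 x + besselY0 x

/-!
Everything rests on the transform of `Im (J_{iτ}(x)²)` against the kernel
`x K₀ˢ(2xs) - 1/(πs)` at `s = cosh u`. This kernel is minus a Laplace transform in `x`, and `J_ν²`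
is an average of `J_{2ν}` over the arcsine distribution, so the Laplace transform of `J_{2iτ}`,
which is `exp (-2iτr) / cosh r` at `sinh r`, reduces the transform to an elementary integral. It
equals `sin (2τu) / (sinh (2u) cosh (πτ))` up to a constant. Multiplying by `sinh (2u) sin (nu)`
and integrating over `u ∈ (0, π)` turns the functions `Im (J_{im/2}²)` into the orthogonal system
`sin (mu)`, which isolates `a_n`.
-/

section

open Real
open Complex (I)

/-! ### The Bessel–Clifford series and Bessel's equation -/

/-- The coefficients of the series of `J_ν`: `J_ν(x) = (x/2)^ν ∑ besselCoeff ν k * (x/2)^(2k)`. -/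
noncomputable def besselCoeff (ν : ℂ) (k : ℕ) : ℂ :=
  (-1) ^ k / (k.factorial * Complex.Gamma (ν + k + 1))

/-- The entire factor of the Bessel function, `J_ν(x) = (x/2)^ν * besselClifford ν ((x/2)²)`;
this is the Bessel–Clifford function `𝒞_ν` at `-z`. -/
noncomputable def besselClifford (ν z : ℂ) : ℂ := ∑' k, besselCoeff ν k * z ^ k

/-- The Euler derivative `x * J_ν'(x)` of the Bessel function, in closed form. -/
noncomputable def eulerBesselJ (ν : ℂ) (x : ℝ) : ℂ :=
  Complex.exp (ν * log (x / 2)) * (ν * besselClifford ν ((x / 2) ^ 2) -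
    2 * (x / 2) ^ 2 * besselClifford (ν + 1) ((x / 2) ^ 2))

lemma besselCoeff_succ_mul (ν : ℂ) (k : ℕ) :
    besselCoeff ν (k + 1) * (k + 1) = -besselCoeff (ν + 1) k := by
  have hk : (k + 1 : ℂ) ≠ 0 := k.cast_add_one_ne_zero
  simp only [besselCoeff, Nat.factorial_succ, Nat.cast_mul, Nat.cast_succ, div_eq_mul_inv, mul_inv,
    pow_succ, show ν + 1 + k + 1 = ν + (k + 1) + 1 by ring]
  field_simp

lemma besselCoeff_eq_mul_add_one (ν : ℂ) (k : ℕ) :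
    besselCoeff ν k = (ν + k + 1) * besselCoeff (ν + 1) k := by
  simp only [besselCoeff, div_eq_mul_inv, mul_inv,
    Complex.one_div_Gamma_eq_self_mul_one_div_Gamma_add_one (ν + k + 1),
    show ν + 1 + k + 1 = ν + k + 1 + 1 by ring]
  ring

lemma besselCoeff_eq_neg_mul_succ (ν : ℂ) (k : ℕ) :
    besselCoeff ν k = -((ν + k + 1) * (k + 1) * besselCoeff ν (k + 1)) := by
  linear_combination besselCoeff_eq_mul_add_one ν k + (ν + k + 1) * besselCoeff_succ_mul ν k

lemma summable_norm_besselCoeff_mul_pow (ν z : ℂ) :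
    Summable fun k => ‖besselCoeff ν k * z ^ k‖ := by
  refine summable_of_ratio_norm_eventually_le (r := 1 / 2) (by norm_num) ?_
  have hlarge : Tendsto (fun k : ℕ => (k : ℝ) + 1 - ‖ν‖) atTop atTop :=
    tendsto_atTop_add_const_right _ _
      (tendsto_atTop_add_const_right _ _ tendsto_natCast_atTop_atTop)
  filter_upwards [hlarge.eventually_ge_atTop (max 1 (2 * ‖z‖))] with k hk
  have hnorm : (k : ℝ) + 1 - ‖ν‖ ≤ ‖ν + k + 1‖ := by
    have h := norm_sub_norm_le ((k : ℂ) + 1) (-ν)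
    rwa [norm_neg, show (k : ℂ) + 1 - -ν = ν + k + 1 by ring,
      show ‖(k : ℂ) + 1‖ = (k : ℝ) + 1 by exact_mod_cast Complex.norm_natCast (k + 1)] at h
  have hone := (le_max_left _ _).trans hk
  have htwo := (le_max_right _ _).trans hk
  have hprod : 2 * ‖z‖ ≤ ‖ν + k + 1‖ * (k + 1) := by nlinarith [norm_nonneg ν]
  rw [norm_norm, norm_norm, besselCoeff_eq_neg_mul_succ ν k]
  have hk' : ‖(k : ℂ) + 1‖ = (k : ℝ) + 1 := by exact_mod_cast Complex.norm_natCast (k + 1)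
  simp only [norm_mul, norm_neg, norm_pow, pow_succ, hk']
  have := mul_le_mul_of_nonneg_right hprod
    (mul_nonneg (norm_nonneg (besselCoeff ν (k + 1))) (pow_nonneg (norm_nonneg z) k))
  linarith

lemma summable_besselCoeff_mul_pow (ν z : ℂ) : Summable fun k => besselCoeff ν k * z ^ k :=
  (summable_norm_besselCoeff_mul_pow ν z).of_norm

lemma besselClifford_zero (ν : ℂ) : besselClifford ν 0 = (Complex.Gamma (ν + 1))⁻¹ := by
  rw [besselClifford, tsum_eq_single 0 fun k hk => by simp [hk]]
  simp [besselCoeff]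

lemma hasSum_besselCoeff_mul_natCast_mul_pow_pred (ν z : ℂ) :
    HasSum (fun k => besselCoeff ν k * (k * z ^ (k - 1))) (-besselClifford (ν + 1) z) := by
  rw [hasSum_nat_add_iff' 1 |>.symm]
  simpa [besselClifford, ← mul_assoc, besselCoeff_succ_mul] using
    (summable_besselCoeff_mul_pow (ν + 1) z).hasSum.neg

lemma hasDerivAt_besselClifford (ν z : ℂ) :
    HasDerivAt (besselClifford ν) (-besselClifford (ν + 1) z) z := by
  set R : ℝ := ‖z‖ + 1
  have hbound : Summable fun k : ℕ => ‖besselCoeff ν k * (k * (R : ℂ) ^ (k - 1))‖ := by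
    rw [← summable_nat_add_iff 1]
    simpa [← mul_assoc, besselCoeff_succ_mul, ← norm_mul] using
      summable_norm_besselCoeff_mul_pow (ν + 1) R
  have hterm (k : ℕ) (y : ℂ) : HasDerivAt (fun y => besselCoeff ν k * y ^ k)
      (besselCoeff ν k * (k * y ^ (k - 1))) y := (hasDerivAt_pow k y).const_mul _
  rw [← (hasSum_besselCoeff_mul_natCast_mul_pow_pred ν z).tsum_eq]
  refine hasDerivAt_tsum_of_isPreconnected hbound Metric.isOpen_ball
    (convex_ball (0 : ℂ) R).isPreconnected (fun k y _ => hterm k y) (fun k y hy => ?_)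
    (Metric.mem_ball_self (by positivity)) (summable_besselCoeff_mul_pow ν 0) (by simp [R])
  have hy' : ‖y‖ ≤ R := (mem_ball_zero_iff.mp hy).le
  simp only [norm_mul, norm_pow, Complex.norm_real, norm_of_nonneg (show 0 ≤ R by positivity)]
  gcongr

lemma continuous_besselClifford (ν : ℂ) : Continuous (besselClifford ν) :=
  continuous_iff_continuousAt.mpr fun z => (hasDerivAt_besselClifford ν z).continuousAt

lemma besselClifford_recurrence (ν z : ℂ) :
    besselClifford ν z =
      (ν + 1) * besselClifford (ν + 1) z - z * besselClifford (ν + 1 + 1) z := by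
  have hderiv := (hasSum_besselCoeff_mul_natCast_mul_pow_pred (ν + 1) z).mul_left z
  have hsum := ((summable_besselCoeff_mul_pow (ν + 1) z).hasSum.mul_left (ν + 1)).add hderiv
  refine Eq.trans ?_ (hsum.tsum_eq.trans (by simp only [besselClifford]; ring))
  refine tsum_congr fun k => ?_
  rcases k with _ | k <;> rw [besselCoeff_eq_mul_add_one ν]
  · simp
  · rw [Nat.add_sub_cancel, pow_succ]; push_cast; ring

lemma besselJ_eq_exp_mul_besselClifford (ν : ℂ) {x : ℝ} (hx : 0 < x) :
    besselJ ν x = Complex.exp (ν * log (x / 2)) * besselClifford ν ((x / 2) ^ 2) := by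
  have hpow (k : ℕ) : Complex.exp ((ν + 2 * k) * log (x / 2)) =
      Complex.exp (ν * log (x / 2)) * (((x : ℂ) / 2) ^ 2) ^ k := by
    rw [show (ν + 2 * k) * (log (x / 2) : ℂ) = ν * log (x / 2) + (2 * k : ℕ) * log (x / 2) by
        push_cast; ring, Complex.exp_add, Complex.exp_nat_mul, ← Complex.ofReal_exp,
      exp_log (by positivity), pow_mul]
    push_cast; rfl
  simp only [besselJ, besselClifford, ← tsum_mul_left, hpow, besselCoeff]
  exact tsum_congr fun k => by ring

lemma hasDerivAt_exp_mul_log_half (ν : ℂ) {x : ℝ} (hx : 0 < x) :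
    HasDerivAt (fun x : ℝ => Complex.exp (ν * log (x / 2)))
      (Complex.exp (ν * log (x / 2)) * (ν / x)) x := by
  have hlog := (((hasDerivAt_id x).div_const 2).log (by simp [hx.ne'])).ofReal_comp
  refine (hlog.const_mul ν).cexp.congr_deriv ?_
  have : (x : ℂ) ≠ 0 := by exact_mod_cast hx.ne'
  simp [div_eq_mul_inv]

lemma hasDerivAt_besselClifford_half_sq (ν : ℂ) (x : ℝ) :
    HasDerivAt (fun x : ℝ => besselClifford ν ((x / 2) ^ 2))
      (-(x / 2) * besselClifford (ν + 1) ((x / 2) ^ 2)) x := by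
  have hsq : HasDerivAt (fun z : ℂ => (z / 2) ^ 2) (x / 2 : ℂ) x :=
    (((hasDerivAt_id (x : ℂ)).div_const 2).pow 2).congr_deriv (by simp; ring)
  have h := (hasDerivAt_besselClifford ν (((x : ℂ) / 2) ^ 2)).comp (x : ℂ) hsq
  exact h.comp_ofReal.congr_deriv (by ring)

lemma hasDerivAt_besselJ (ν : ℂ) {x : ℝ} (hx : 0 < x) :
    HasDerivAt (besselJ ν) (x⁻¹ • eulerBesselJ ν x) x := by
  have hx' : (x : ℂ) ≠ 0 := by exact_mod_cast hx.ne'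
  refine (((hasDerivAt_exp_mul_log_half ν hx).mul
    (hasDerivAt_besselClifford_half_sq ν x)).congr_of_eventuallyEq ?_).congr_deriv ?_
  · filter_upwards [Ioi_mem_nhds hx] with y hy using besselJ_eq_exp_mul_besselClifford ν hy
  · simp only [eulerBesselJ, Complex.real_smul, Complex.ofReal_inv]
    field_simp
    ring

lemma hasDerivAt_eulerBesselJ (ν : ℂ) {x : ℝ} (hx : 0 < x) :
    HasDerivAt (eulerBesselJ ν) (x⁻¹ • ((ν ^ 2 - x ^ 2) * besselJ ν x)) x := by
  have hx' : (x : ℂ) ≠ 0 := by exact_mod_cast hx.ne'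
  have hsq : HasDerivAt (fun x : ℝ => 2 * ((x : ℂ) / 2) ^ 2) (x : ℂ) x :=
    ((((hasDerivAt_id (x : ℂ)).div_const 2).pow 2).const_mul 2).comp_ofReal.congr_deriv
      (by simp; ring)
  refine ((hasDerivAt_exp_mul_log_half ν hx).mul
    (((hasDerivAt_besselClifford_half_sq ν x).const_mul ν).sub
      (hsq.mul (hasDerivAt_besselClifford_half_sq (ν + 1) x)))).congr_deriv ?_
  rw [besselJ_eq_exp_mul_besselClifford ν hx]
  simp only [Pi.sub_apply, Pi.mul_apply, besselClifford_recurrence ν, Complex.real_smul,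
    Complex.ofReal_inv]
  field_simp
  ring

lemma continuousOn_besselJ (ν : ℂ) : ContinuousOn (besselJ ν) (Set.Ioi 0) :=
  fun _ hx => (hasDerivAt_besselJ ν hx).continuousAt.continuousWithinAt

lemma continuousOn_eulerBesselJ (ν : ℂ) : ContinuousOn (eulerBesselJ ν) (Set.Ioi 0) :=
  fun _ hx => (hasDerivAt_eulerBesselJ ν hx).continuousAt.continuousWithinAt

/-! ### Uniform bounds for Bessel functions of imaginary order -/

lemma sq_eq_neg_norm_sq_of_re_eq_zero {ν : ℂ} (hν : ν.re = 0) : ν ^ 2 = -(‖ν‖ ^ 2 : ℝ) := by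
  rw [← Complex.normSq_eq_norm_sq, Complex.normSq_apply]
  apply Complex.ext <;> simp [sq, hν]

lemma norm_exp_mul_ofReal_of_re_eq_zero {ν : ℂ} (hν : ν.re = 0) (r : ℝ) :
    ‖Complex.exp (ν * r)‖ = 1 := by
  simp [Complex.norm_exp, hν]

/-- The Sonin-type energy of the Bessel equation, which decreases along `(0, ∞)` when the order
is purely imaginary. -/
noncomputable def besselEnergy (ν : ℂ) (x : ℝ) : ℝ :=
  ‖eulerBesselJ ν x‖ ^ 2 / (x ^ 2 + ‖ν‖ ^ 2) + ‖besselJ ν x‖ ^ 2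

lemma hasDerivAt_besselEnergy {ν : ℂ} (hν : ν.re = 0) {x : ℝ} (hx : 0 < x) :
    HasDerivAt (besselEnergy ν)
      (-(2 * x * ‖eulerBesselJ ν x‖ ^ 2 / (x ^ 2 + ‖ν‖ ^ 2) ^ 2)) x := by
  have hv : HasDerivAt (eulerBesselJ ν) (-((x ^ 2 + ‖ν‖ ^ 2) / x) • besselJ ν x) x := by
    refine (hasDerivAt_eulerBesselJ ν hx).congr_deriv ?_
    rw [sq_eq_neg_norm_sq_of_re_eq_zero hν, Complex.real_smul, Complex.real_smul]
    push_cast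
    ring
  have hden : HasDerivAt (fun y : ℝ => y ^ 2 + ‖ν‖ ^ 2) (2 * x) x :=
    ((hasDerivAt_pow 2 x).add_const _).congr_deriv (by simp)
  have hne : x ^ 2 + ‖ν‖ ^ 2 ≠ 0 := by positivity
  refine ((hv.norm_sq.div hden hne).add (hasDerivAt_besselJ ν hx).norm_sq).congr_deriv ?_
  rw [inner_smul_right, inner_smul_right, real_inner_comm]
  field_simp
  ring

lemma antitoneOn_besselEnergy {ν : ℂ} (hν : ν.re = 0) :
    AntitoneOn (besselEnergy ν) (Set.Ioi 0) := by
  refine antitoneOn_of_deriv_nonpos (convex_Ioi 0)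
    (fun x hx => (hasDerivAt_besselEnergy hν hx).continuousAt.continuousWithinAt) ?_ ?_ <;>
    rw [interior_Ioi] <;> intro x (hx : 0 < x)
  · exact (hasDerivAt_besselEnergy hν hx).differentiableAt.differentiableWithinAt
  · rw [(hasDerivAt_besselEnergy hν hx).deriv, neg_nonpos]
    positivity

lemma norm_eulerBesselJ_sq_div_le {ν : ℂ} (hν : ν.re = 0) {x : ℝ} (hx : 0 < x) :
    ‖eulerBesselJ ν x‖ ^ 2 / (x ^ 2 + ‖ν‖ ^ 2) ≤ (‖besselClifford ν ((x / 2) ^ 2)‖ +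
      x / 2 * ‖besselClifford (ν + 1) ((x / 2) ^ 2)‖) ^ 2 := by
  set g₀ := besselClifford ν ((x / 2) ^ 2)
  set g₁ := besselClifford (ν + 1) ((x / 2) ^ 2)
  have hnorm : ‖eulerBesselJ ν x‖ ≤ ‖ν‖ * ‖g₀‖ + x * (x / 2 * ‖g₁‖) := by
    rw [eulerBesselJ, norm_mul, norm_exp_mul_ofReal_of_re_eq_zero hν, one_mul]
    refine (norm_sub_le _ _).trans_eq ?_
    simp only [norm_mul, norm_pow, norm_div, Complex.norm_real, norm_of_nonneg hx.le,
      Complex.norm_ofNat]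
    ring
  have hν_le : ‖ν‖ ≤ √(x ^ 2 + ‖ν‖ ^ 2) := le_sqrt_of_sq_le (by nlinarith [sq_nonneg x])
  have hx_le : x ≤ √(x ^ 2 + ‖ν‖ ^ 2) := le_sqrt_of_sq_le (by nlinarith [sq_nonneg ‖ν‖])
  rw [div_le_iff₀ (by positivity)]
  calc ‖eulerBesselJ ν x‖ ^ 2
      ≤ (√(x ^ 2 + ‖ν‖ ^ 2) * ‖g₀‖ + √(x ^ 2 + ‖ν‖ ^ 2) * (x / 2 * ‖g₁‖)) ^ 2 := by
        refine pow_le_pow_left₀ (norm_nonneg _) (hnorm.trans ?_) 2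
        gcongr
    _ = (‖g₀‖ + x / 2 * ‖g₁‖) ^ 2 * √(x ^ 2 + ‖ν‖ ^ 2) ^ 2 := by ring
    _ = (‖g₀‖ + x / 2 * ‖g₁‖) ^ 2 * (x ^ 2 + ‖ν‖ ^ 2) := by rw [sq_sqrt (by positivity)]

lemma besselEnergy_le {ν : ℂ} (hν : ν.re = 0) {x : ℝ} (hx : 0 < x) :
    besselEnergy ν x ≤ 2 / ‖Complex.Gamma (ν + 1)‖ ^ 2 := by
  have hlim : Tendsto (fun y : ℝ => (‖besselClifford ν ((y / 2) ^ 2)‖ +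
        y / 2 * ‖besselClifford (ν + 1) ((y / 2) ^ 2)‖) ^ 2 +
      ‖besselClifford ν ((y / 2) ^ 2)‖ ^ 2) (𝓝[>] 0) (𝓝 (2 / ‖Complex.Gamma (ν + 1)‖ ^ 2)) := by
    have hcont (μ : ℂ) : Continuous fun y : ℝ => ‖besselClifford μ ((y / 2) ^ 2)‖ :=
      ((continuous_besselClifford μ).comp (by fun_prop)).norm
    have h := (((hcont ν).add ((continuous_id.div_const 2).mul (hcont (ν + 1)))).pow 2).add
      ((hcont ν).pow 2)
    refine (h.tendsto 0).mono_left nhdsWithin_le_nhds |>.trans_eq ?_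
    simp [besselClifford_zero, ← two_mul, div_eq_mul_inv]
  refine ge_of_tendsto hlim ?_
  filter_upwards [Ioo_mem_nhdsGT hx] with y hy
  calc besselEnergy ν x ≤ besselEnergy ν y := antitoneOn_besselEnergy hν hy.1 hx hy.2.le
    _ ≤ _ := by
      refine add_le_add (norm_eulerBesselJ_sq_div_le hν hy.1) ?_
      rw [besselJ_eq_exp_mul_besselClifford ν hy.1, norm_mul,
        norm_exp_mul_ofReal_of_re_eq_zero hν, one_mul]

lemma norm_besselJ_sq_le {ν : ℂ} (hν : ν.re = 0) {x : ℝ} (hx : 0 < x) :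
    ‖besselJ ν x‖ ^ 2 ≤ 2 / ‖Complex.Gamma (ν + 1)‖ ^ 2 :=
  (le_add_of_nonneg_left (by positivity)).trans (besselEnergy_le hν hx)

lemma norm_besselJ_le {ν : ℂ} (hν : ν.re = 0) {x : ℝ} (hx : 0 < x) :
    ‖besselJ ν x‖ ≤ √(2 / ‖Complex.Gamma (ν + 1)‖ ^ 2) :=
  le_sqrt_of_sq_le (norm_besselJ_sq_le hν hx)

lemma norm_eulerBesselJ_le {ν : ℂ} (hν : ν.re = 0) {x : ℝ} (hx : 0 < x) :
    ‖eulerBesselJ ν x‖ ≤ √(2 / ‖Complex.Gamma (ν + 1)‖ ^ 2) * (x + ‖ν‖) := by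
  have hdiv : ‖eulerBesselJ ν x‖ ^ 2 / (x ^ 2 + ‖ν‖ ^ 2) ≤ 2 / ‖Complex.Gamma (ν + 1)‖ ^ 2 :=
    (le_add_of_nonneg_right (by positivity)).trans (besselEnergy_le hν hx)
  rw [div_le_iff₀ (by positivity)] at hdiv
  refine le_of_sq_le_sq ?_ (by positivity)
  rw [mul_pow, sq_sqrt (by positivity)]
  refine hdiv.trans (mul_le_mul_of_nonneg_left ?_ (by positivity))
  nlinarith [norm_nonneg ν]

/-! ### Moments of the Laplace transform -/

section LaplaceMoment

variable {E : Type*} [NormedAddCommGroup E] [NormedSpace ℝ E]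

/-- Continuity and polynomial growth on `(0, ∞)`; unlike temperate growth this ignores what the
function does off the open half-line. -/
structure HasPolynomialGrowth (φ : ℝ → E) : Prop where
  continuousOn : ContinuousOn φ (Set.Ioi 0)
  exists_norm_le : ∃ (K : ℝ) (n : ℕ), ∀ x, 0 < x → ‖φ x‖ ≤ K * (1 + x) ^ n

/-- The `k`-th moment `∫₀^∞ x^k e^{-px} φ(x) dx` of the Laplace transform of `φ`. -/
noncomputable def laplaceMoment (φ : ℝ → E) (k : ℕ) (p : ℝ) : E :=
  ∫ x in Set.Ioi 0, (x ^ k * exp (-(p * x))) • φ x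

lemma integrableOn_exp_neg_mul_Ioi {p : ℝ} (hp : 0 < p) :
    IntegrableOn (fun x => exp (-(p * x))) (Set.Ioi 0) := by
  simpa using integrableOn_exp_mul_Ioi (neg_neg_of_pos hp) 0

lemma exists_one_add_pow_mul_exp_neg_le (m : ℕ) {p : ℝ} (hp : 0 < p) :
    ∃ C, ∀ x, 0 < x → (1 + x) ^ m * exp (-(p * x)) ≤ C * exp (-(p / 2 * x)) := by
  refine ⟨m.factorial * exp (p / 2) / (p / 2) ^ m, fun x hx => ?_⟩
  have h := pow_div_factorial_le_exp (p / 2 * (1 + x)) (by positivity) m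
  rw [div_le_iff₀ (by positivity), mul_pow] at h
  rw [div_mul_eq_mul_div, le_div_iff₀ (by positivity)]
  calc (1 + x) ^ m * exp (-(p * x)) * (p / 2) ^ m
      = (p / 2) ^ m * (1 + x) ^ m * exp (-(p * x)) := by ring
    _ ≤ exp (p / 2 * (1 + x)) * m.factorial * exp (-(p * x)) := by gcongr
    _ = m.factorial * (exp (p / 2 * (1 + x)) * exp (-(p * x))) := by ring
    _ = m.factorial * exp (p / 2) * exp (-(p / 2 * x)) := by
      rw [← exp_add, mul_assoc, ← exp_add]; ring_nf

namespace HasPolynomialGrowth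

variable {φ ψ : ℝ → E}

lemma exists_norm_pow_mul_exp_smul_le (hφ : HasPolynomialGrowth φ) (k : ℕ) {p : ℝ} (hp : 0 < p) :
    ∃ C, ∀ x, 0 < x → ‖(x ^ k * exp (-(p * x))) • φ x‖ ≤ C * exp (-(p / 2 * x)) := by
  obtain ⟨K, n, hK⟩ := hφ.exists_norm_le
  obtain ⟨C, hbound⟩ := exists_one_add_pow_mul_exp_neg_le (k + n) hp
  refine ⟨|K| * C, fun x hx => ?_⟩
  rw [norm_smul, norm_of_nonneg (by positivity)]
  calc x ^ k * exp (-(p * x)) * ‖φ x‖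
      ≤ (1 + x) ^ k * exp (-(p * x)) * (|K| * (1 + x) ^ n) := by
        gcongr
        · linarith
        · exact (hK x hx).trans (by gcongr; exact le_abs_self K)
    _ = |K| * ((1 + x) ^ (k + n) * exp (-(p * x))) := by ring
    _ ≤ |K| * (C * exp (-(p / 2 * x))) := mul_le_mul_of_nonneg_left (hbound x hx) (abs_nonneg K)
    _ = |K| * C * exp (-(p / 2 * x)) := by ring

lemma aestronglyMeasurable_smul (hφ : HasPolynomialGrowth φ) {w : ℝ → ℝ} (hw : Continuous w) :
    AEStronglyMeasurable (fun x => w x • φ x) (volume.restrict (Set.Ioi 0)) :=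
  (hw.continuousOn.smul hφ.continuousOn).aestronglyMeasurable measurableSet_Ioi

lemma integrableOn_pow_mul_exp_smul (hφ : HasPolynomialGrowth φ) (k : ℕ) {p : ℝ} (hp : 0 < p) :
    IntegrableOn (fun x => (x ^ k * exp (-(p * x))) • φ x) (Set.Ioi 0) := by
  obtain ⟨C, hC⟩ := hφ.exists_norm_pow_mul_exp_smul_le k hp
  exact ((integrableOn_exp_neg_mul_Ioi (half_pos hp)).const_mul C).mono'
    (hφ.aestronglyMeasurable_smul (by fun_prop)) (ae_restrict_of_forall_mem measurableSet_Ioi hC)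

lemma hasDerivAt_laplaceMoment (hφ : HasPolynomialGrowth φ) (k : ℕ) {p : ℝ} (hp : 0 < p) :
    HasDerivAt (laplaceMoment φ k) (-laplaceMoment φ (k + 1) p) p := by
  obtain ⟨C, hC⟩ := hφ.exists_norm_pow_mul_exp_smul_le (k + 1) (half_pos hp)
  rw [laplaceMoment, ← integral_neg]
  refine (hasDerivAt_integral_of_dominated_loc_of_deriv_le
    (F := fun p x => (x ^ k * exp (-(p * x))) • φ x)
    (F' := fun p x => -((x ^ (k + 1) * exp (-(p * x))) • φ x))
    (Ioi_mem_nhds (half_lt_self hp)) (.of_forall fun q =>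
      hφ.aestronglyMeasurable_smul (by fun_prop)) (hφ.integrableOn_pow_mul_exp_smul k hp)
    (hφ.aestronglyMeasurable_smul (by fun_prop)).neg
    (ae_restrict_of_forall_mem measurableSet_Ioi fun x (hx : 0 < x) q (hq : p / 2 < q) => ?_)
    ((integrableOn_exp_neg_mul_Ioi (half_pos (half_pos hp))).const_mul C)
    (.of_forall fun x q _ => ?_)).2
  · refine le_trans ?_ (hC x hx)
    rw [norm_neg, norm_smul, norm_smul, norm_of_nonneg (by positivity),
      norm_of_nonneg (by positivity)]
    gcongr
  · have hexp : HasDerivAt (fun q => exp (-(q * x))) (exp (-(q * x)) * -x) q := by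
      simpa using ((hasDerivAt_id q).mul_const x).neg.exp
    rw [← neg_smul]
    exact ((hexp.const_mul (x ^ k)).congr_deriv (by ring)).smul_const (φ x)

lemma tendsto_pow_mul_exp_smul_atTop (hφ : HasPolynomialGrowth φ) (k : ℕ) {p : ℝ} (hp : 0 < p) :
    Tendsto (fun x => (x ^ k * exp (-(p * x))) • φ x) atTop (𝓝 0) := by
  obtain ⟨C, hC⟩ := hφ.exists_norm_pow_mul_exp_smul_le k hp
  refine squeeze_zero_norm' ((eventually_gt_atTop 0).mono hC) ?_
  simpa using (tendsto_exp_neg_atTop_nhds_zero.comp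
    (tendsto_id.const_mul_atTop (half_pos hp))).const_mul C

lemma continuousWithinAt_pow_succ_mul_exp_smul (hφ : HasPolynomialGrowth φ) (k : ℕ) {p : ℝ}
    (hp : 0 < p) :
    ContinuousWithinAt (fun x => (x ^ (k + 1) * exp (-(p * x))) • φ x) (Set.Ici 0) 0 := by
  obtain ⟨C, hbound⟩ := hφ.exists_norm_pow_mul_exp_smul_le k hp
  have hlim : Tendsto (fun x : ℝ => x * (C * exp (-(p / 2 * x)))) (𝓝[≥] 0) (𝓝 0) :=
    ((by fun_prop : Continuous fun x : ℝ => x * (C * exp (-(p / 2 * x)))).tendsto' 0 0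
      (by simp)).mono_left nhdsWithin_le_nhds
  rw [ContinuousWithinAt, zero_pow k.succ_ne_zero, zero_mul, zero_smul]
  refine squeeze_zero_norm' ?_ hlim
  filter_upwards [self_mem_nhdsWithin] with x hx
  rcases (Set.mem_Ici.mp hx).eq_or_lt with rfl | hx
  · simp
  · rw [pow_succ', mul_assoc, mul_smul, norm_smul, norm_of_nonneg hx.le]
    gcongr
    exact hbound x hx

lemma laplaceMoment_eq_of_hasDerivAt [CompleteSpace E] (hφ : HasPolynomialGrowth φ)
    (hψ : HasPolynomialGrowth ψ) (hderiv : ∀ x, 0 < x → HasDerivAt φ (x⁻¹ • ψ x) x) (k : ℕ) {p : ℝ}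
    (hp : 0 < p) :
    laplaceMoment ψ k p =
      p • laplaceMoment φ (k + 1) p - (k + 1 : ℝ) • laplaceMoment φ k p := by
  have hφk : IntegrableOn (fun x => (k + 1 : ℝ) • (x ^ k * exp (-(p * x))) • φ x) (Set.Ioi 0) :=
    (hφ.integrableOn_pow_mul_exp_smul k hp).smul (k + 1 : ℝ)
  have hφk1 : IntegrableOn (fun x => p • (x ^ (k + 1) * exp (-(p * x))) • φ x) (Set.Ioi 0) :=
    (hφ.integrableOn_pow_mul_exp_smul (k + 1) hp).smul p
  have hψk := hψ.integrableOn_pow_mul_exp_smul k hp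
  have hprod (x : ℝ) (hx : 0 < x) : HasDerivAt (fun x => (x ^ (k + 1) * exp (-(p * x))) • φ x)
      ((k + 1 : ℝ) • (x ^ k * exp (-(p * x))) • φ x - p • (x ^ (k + 1) * exp (-(p * x))) • φ x
        + (x ^ k * exp (-(p * x))) • ψ x) x := by
    have hexp : HasDerivAt (fun x => exp (-(p * x))) (exp (-(p * x)) * -p) x := by
      simpa using ((hasDerivAt_id x).const_mul p).neg.exp
    refine (((hasDerivAt_pow (k + 1) x).mul hexp).smul (hderiv x hx)).congr_deriv ?_
    simp only [smul_smul, ← sub_smul, Nat.cast_succ, Nat.add_sub_cancel, Pi.mul_apply, pow_succ]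
    rw [add_comm]
    congr 2
    · ring
    · field_simp
  have hFTC := integral_Ioi_of_hasDerivAt_of_tendsto
    (hφ.continuousWithinAt_pow_succ_mul_exp_smul k hp) hprod ((hφk.sub hφk1).add hψk)
    (hφ.tendsto_pow_mul_exp_smul_atTop (k + 1) hp)
  simp only [ne_eq, k.succ_ne_zero, not_false_eq_true, zero_pow, zero_mul, zero_smul, sub_zero]
    at hFTC
  have hsum := integral_add (hφk.sub hφk1) hψk
  simp only [Pi.sub_apply] at hsum
  rw [hsum, integral_sub hφk hφk1, integral_smul, integral_smul] at hFTC
  exact sub_eq_zero.mp (Eq.trans (by simp only [laplaceMoment]; abel) hFTC)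

end HasPolynomialGrowth

end LaplaceMoment

lemma hasPolynomialGrowth_besselJ {ν : ℂ} (hν : ν.re = 0) : HasPolynomialGrowth (besselJ ν) where
  continuousOn := continuousOn_besselJ ν
  exists_norm_le := ⟨_, 0, fun x hx => by simpa using norm_besselJ_le hν hx⟩

lemma hasPolynomialGrowth_eulerBesselJ {ν : ℂ} (hν : ν.re = 0) :
    HasPolynomialGrowth (eulerBesselJ ν) where
  continuousOn := continuousOn_eulerBesselJ ν
  exists_norm_le := by
    refine ⟨√(2 / ‖Complex.Gamma (ν + 1)‖ ^ 2) * (1 + ‖ν‖), 1, fun x hx => ?_⟩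
    refine (norm_eulerBesselJ_le hν hx).trans ?_
    rw [pow_one, mul_assoc]
    gcongr
    nlinarith [norm_nonneg ν]

lemma hasPolynomialGrowth_sq_sub_sq_mul_besselJ {ν : ℂ} (hν : ν.re = 0) :
    HasPolynomialGrowth fun x : ℝ => (ν ^ 2 - x ^ 2) * besselJ ν x where
  continuousOn := ContinuousOn.mul (by fun_prop) (continuousOn_besselJ ν)
  exists_norm_le := by
    refine ⟨(1 + ‖ν‖ ^ 2) * √(2 / ‖Complex.Gamma (ν + 1)‖ ^ 2), 2, fun x hx => ?_⟩
    have hpoly : ‖ν ^ 2 - (x : ℂ) ^ 2‖ ≤ (1 + ‖ν‖ ^ 2) * (1 + x) ^ 2 := by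
      refine (norm_sub_le _ _).trans ?_
      rw [norm_pow, norm_pow, Complex.norm_real, norm_of_nonneg hx.le]
      nlinarith [mul_nonneg (sq_nonneg ‖ν‖) hx.le, mul_nonneg (sq_nonneg ‖ν‖) (sq_nonneg x)]
    rw [norm_mul, mul_right_comm]
    gcongr
    exact norm_besselJ_le hν hx

lemma laplaceMoment_besselJ_ode {ν : ℂ} (hν : ν.re = 0) {p : ℝ} (hp : 0 < p) :
    (p ^ 2 + 1) * laplaceMoment (besselJ ν) 2 p - 3 * p * laplaceMoment (besselJ ν) 1 p +
      (1 - ν ^ 2) * laplaceMoment (besselJ ν) 0 p = 0 := by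
  have hJ := hasPolynomialGrowth_besselJ hν
  have hv := hasPolynomialGrowth_eulerBesselJ hν
  have hstep := hJ.laplaceMoment_eq_of_hasDerivAt hv (fun x hx => hasDerivAt_besselJ ν hx)
  have hsecond := hv.laplaceMoment_eq_of_hasDerivAt (hasPolynomialGrowth_sq_sub_sq_mul_besselJ hν)
    (fun x hx => hasDerivAt_eulerBesselJ ν hx) 0 hp
  have hsplit : laplaceMoment (fun x : ℝ => (ν ^ 2 - x ^ 2) * besselJ ν x) 0 p =
      ν ^ 2 * laplaceMoment (besselJ ν) 0 p - laplaceMoment (besselJ ν) 2 p := by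
    rw [laplaceMoment, laplaceMoment, laplaceMoment, ← integral_const_mul,
      ← integral_sub ((hJ.integrableOn_pow_mul_exp_smul 0 hp).const_mul _)
        (hJ.integrableOn_pow_mul_exp_smul 2 hp)]
    refine integral_congr_ae (.of_forall fun x => ?_)
    simp only [Complex.real_smul, Complex.ofReal_mul, Complex.ofReal_pow]
    ring
  rw [hsplit, hstep 0 hp, hstep (0 + 1) hp] at hsecond
  simp only [Complex.real_smul] at hsecond
  push_cast at hsecond
  linear_combination -hsecond

/-! ### The Laplace transform of `J_ν` -/

lemma pow_succ_smul_laplaceMoment {E : Type*} [NormedAddCommGroup E] [NormedSpace ℝ E] (φ : ℝ → E)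
    (k : ℕ) {p : ℝ} (hp : 0 < p) :
    p ^ (k + 1) • laplaceMoment φ k p =
      ∫ y in Set.Ioi 0, (y ^ k * exp (-y)) • φ (y / p) := by
  have h := integral_comp_mul_left_Ioi' (fun y => (y ^ k * exp (-y)) • φ (y / p)) 0 hp
  rw [mul_zero] at h
  rw [← h, pow_succ', mul_smul, laplaceMoment, ← integral_smul]
  refine congrArg (p • ·) (integral_congr_ae (.of_forall fun x => ?_))
  simp only [smul_smul, mul_pow, mul_div_cancel_left₀ x hp.ne', mul_assoc]

lemma Gamma_add_one_eq_integral_exp_log {ν : ℂ} (hν : 0 < ν.re + 1) :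
    Complex.Gamma (ν + 1) = ∫ y in Set.Ioi 0, exp (-y) • Complex.exp (ν * log y) := by
  rw [Complex.Gamma_eq_integral (by simpa using hν), Complex.GammaIntegral]
  refine setIntegral_congr_fun measurableSet_Ioi fun y (hy : 0 < y) => ?_
  simp only [add_sub_cancel_right, Complex.real_smul]
  rw [Complex.cpow_def_of_ne_zero (by exact_mod_cast hy.ne'), ← Complex.ofReal_log hy.le,
    mul_comm ν]

lemma Gamma_add_natCast_add_one_eq_integral {ν : ℂ} (hν : 0 < ν.re + 1) (k : ℕ) :
    Complex.Gamma (ν + k + 1) =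
      ∫ y in Set.Ioi 0, (y ^ k * exp (-y)) • Complex.exp (ν * log y) := by
  rw [Gamma_add_one_eq_integral_exp_log
    (by simpa using by linarith [(k.cast_nonneg : (0 : ℝ) ≤ k)])]
  refine setIntegral_congr_fun measurableSet_Ioi fun y (hy : 0 < y) => ?_
  simp only [Complex.real_smul, add_mul, Complex.exp_add, Complex.exp_nat_mul, Complex.ofReal_mul,
    Complex.ofReal_pow]
  rw [← Complex.ofReal_exp, exp_log hy]
  ring

lemma besselJ_div_mul_exp_log (ν : ℂ) {p y : ℝ} (hp : 0 < p) (hy : 0 < y) :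
    besselJ ν (y / p) * Complex.exp (ν * log (2 * p)) =
      Complex.exp (ν * log y) * besselClifford ν ((y / p / 2) ^ 2) := by
  rw [besselJ_eq_exp_mul_besselClifford ν (by positivity), mul_right_comm, ← Complex.exp_add,
    ← mul_add, ← Complex.ofReal_add, ← log_mul (by positivity) (by positivity)]
  rw [show y / p / 2 * (2 * p) = y by field_simp]
  push_cast
  rfl

lemma tendsto_besselClifford_div_sq (ν : ℂ) (y : ℝ) :
    Tendsto (fun p : ℝ => besselClifford ν ((y / p / 2) ^ 2)) atTop
      (𝓝 (Complex.Gamma (ν + 1))⁻¹) := by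
  have hinv : Tendsto (fun p : ℝ => ((y : ℂ) / p / 2) ^ 2) atTop (𝓝 0) := by
    have h := (Complex.continuous_ofReal.tendsto 0).comp
      ((tendsto_const_nhds (x := y)).div_atTop tendsto_id)
    simpa [Function.comp_def] using (h.div_const 2).pow 2
  rw [← besselClifford_zero]
  exact ((continuous_besselClifford ν).tendsto 0).comp hinv

lemma tendsto_laplaceMoment_besselJ {ν : ℂ} (hν : ν.re = 0) (k : ℕ) :
    Tendsto (fun p : ℝ => p ^ (k + 1) * laplaceMoment (besselJ ν) k p *
      Complex.exp (ν * log (2 * p))) atTop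
      (𝓝 (Complex.Gamma (ν + k + 1) / Complex.Gamma (ν + 1))) := by
  have hre : 0 < ν.re + 1 := by simp [hν]
  have hmeas (p : ℝ) : AEStronglyMeasurable (fun y : ℝ => (y ^ k * exp (-y)) •
      (Complex.exp (ν * log y) * besselClifford ν ((y / p / 2) ^ 2)))
      (volume.restrict (Set.Ioi 0)) := by
    have hg : Continuous fun y : ℝ => besselClifford ν (((y : ℂ) / p / 2) ^ 2) :=
      (continuous_besselClifford ν).comp (by fun_prop)
    have hw : Continuous fun y : ℝ => y ^ k * exp (-y) := by fun_prop
    exact (hw.measurable.smul ((by fun_prop : Measurable fun y : ℝ =>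
      Complex.exp (ν * log y)).mul hg.measurable)).aestronglyMeasurable
  have hbound : ∀ᶠ p : ℝ in atTop, ∀ᵐ y ∂volume.restrict (Set.Ioi 0), ‖(y ^ k * exp (-y)) •
      (Complex.exp (ν * log y) * besselClifford ν ((y / p / 2) ^ 2))‖ ≤
      y ^ k * exp (-(1 * y)) * √(2 / ‖Complex.Gamma (ν + 1)‖ ^ 2) := by
    filter_upwards [eventually_gt_atTop 0] with p hp
    filter_upwards [ae_restrict_mem measurableSet_Ioi] with y (hy : 0 < y)
    rw [← besselJ_div_mul_exp_log ν hp hy, norm_smul, norm_of_nonneg (by positivity), norm_mul,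
      norm_exp_mul_ofReal_of_re_eq_zero hν, mul_one, one_mul]
    exact mul_le_mul_of_nonneg_left (norm_besselJ_le hν (by positivity)) (by positivity)
  have hconst : HasPolynomialGrowth fun _ : ℝ => √(2 / ‖Complex.Gamma (ν + 1)‖ ^ 2) :=
    ⟨continuousOn_const, _, 0, fun _ _ => by simpa using le_abs_self _⟩
  have h := tendsto_integral_filter_of_dominated_convergence _ (.of_forall hmeas) hbound
    (hconst.integrableOn_pow_mul_exp_smul k one_pos) (.of_forall fun y =>
      ((tendsto_besselClifford_div_sq ν y).const_mul _).const_smul _)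
  simp only [← smul_mul_assoc, integral_mul_const,
    ← Gamma_add_natCast_add_one_eq_integral hre] at h
  refine h.congr' ?_
  filter_upwards [eventually_gt_atTop 0] with p hp
  rw [← Complex.ofReal_pow, ← Complex.real_smul, pow_succ_smul_laplaceMoment _ k hp,
    ← integral_mul_const]
  refine setIntegral_congr_fun measurableSet_Ioi fun y hy => ?_
  simp only [smul_mul_assoc, besselJ_div_mul_exp_log ν hp hy]

lemma tendsto_sub_log_two_mul_sinh :
    Tendsto (fun r => r - log (2 * sinh r)) atTop (𝓝 0) := by
  have hexp : Tendsto (fun r : ℝ => exp (-(2 * r))) atTop (𝓝 0) :=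
    tendsto_exp_neg_atTop_nhds_zero.comp (tendsto_id.const_mul_atTop two_pos)
  have hlog := ((hexp.const_sub 1).log (by simp)).neg
  rw [sub_zero, log_one, neg_zero] at hlog
  refine hlog.congr' ?_
  filter_upwards [eventually_gt_atTop 0] with r hr
  have hpos : 0 < 1 - exp (-(2 * r)) := sub_pos.mpr (Real.exp_lt_one_iff.mpr (by linarith))
  rw [show 2 * sinh r = exp r * (1 - exp (-(2 * r))) by
    rw [sinh_eq, mul_sub, ← exp_add]; ring_nf, log_mul (exp_pos r).ne' hpos.ne', log_exp]
  ring

lemma tendsto_sinh_atTop : Tendsto sinh atTop atTop :=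
  sinhOrderIso.tendsto_atTop

lemma tendsto_cosh_div_sinh_sq : Tendsto (fun r => (cosh r / sinh r) ^ 2) atTop (𝓝 1) := by
  have h := (tendsto_inv_atTop_zero.comp tendsto_sinh_atTop).pow 2 |>.const_add 1
  rw [zero_pow two_ne_zero, add_zero] at h
  refine h.congr' ?_
  filter_upwards [eventually_gt_atTop 0] with r hr
  have := (sinh_pos_iff.mpr hr).ne'
  simp only [Function.comp_apply, div_pow, cosh_sq]
  field_simp

lemma tendsto_cosh_div_sinh : Tendsto (fun r => cosh r / sinh r) atTop (𝓝 1) := by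
  have h := tendsto_cosh_div_sinh_sq.sqrt
  rw [sqrt_one] at h
  refine h.congr' ?_
  filter_upwards [eventually_gt_atTop 0] with r hr
  have := sinh_pos_iff.mpr hr
  exact sqrt_sq (by positivity)

lemma exists_eq_mul_exp_of_hasDerivAt {f : ℝ → ℂ} {c : ℂ}
    (hf : ∀ x, 0 < x → HasDerivAt f (c * f x) x) :
    ∃ A, ∀ x, 0 < x → f x = A * Complex.exp (c * x) := by
  have hderiv (x : ℝ) (hx : 0 < x) : HasDerivAt (fun x : ℝ => f x * Complex.exp (-c * x)) 0 x := by
    refine ((hf x hx).mul ((hasDerivAt_id (x : ℂ)).const_mul (-c)).cexp.comp_ofReal).congr_deriv ?_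
    simp only [id]
    ring
  obtain ⟨A, hA⟩ := isOpen_Ioi.exists_is_const_of_deriv_eq_zero (convex_Ioi 0).isPreconnected
    (fun x hx => (hderiv x hx).differentiableAt.differentiableWithinAt)
    (fun x hx => (hderiv x hx).deriv)
  refine ⟨A, fun x hx => ?_⟩
  rw [← hA x hx, mul_assoc, ← Complex.exp_add]
  simp

/-- The Laplace transform of `J_ν` after the substitution `p = sinh r`, multiplied by `cosh r`:
in this form the transformed Bessel equation becomes `y'' = ν² y`. -/
noncomputable def besselLaplace (ν : ℂ) (r : ℝ) : ℂ :=
  cosh r * laplaceMoment (besselJ ν) 0 (sinh r)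

/-- The derivative of `besselLaplace ν`. -/
noncomputable def besselLaplaceDeriv (ν : ℂ) (r : ℝ) : ℂ :=
  sinh r * laplaceMoment (besselJ ν) 0 (sinh r) -
    cosh r ^ 2 * laplaceMoment (besselJ ν) 1 (sinh r)

lemma hasDerivAt_laplaceMoment_besselJ_sinh {ν : ℂ} (hν : ν.re = 0) (k : ℕ) {r : ℝ} (hr : 0 < r) :
    HasDerivAt (fun r => laplaceMoment (besselJ ν) k (sinh r))
      (-(cosh r * laplaceMoment (besselJ ν) (k + 1) (sinh r))) r := by
  have h := ((hasPolynomialGrowth_besselJ hν).hasDerivAt_laplaceMoment k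
    (sinh_pos_iff.mpr hr)).scomp r (hasDerivAt_sinh r)
  exact h.congr_deriv (by simp)

lemma hasDerivAt_besselLaplace {ν : ℂ} (hν : ν.re = 0) {r : ℝ} (hr : 0 < r) :
    HasDerivAt (besselLaplace ν) (besselLaplaceDeriv ν r) r := by
  refine ((hasDerivAt_cosh r).ofReal_comp.mul
    (hasDerivAt_laplaceMoment_besselJ_sinh hν 0 hr)).congr_deriv ?_
  rw [besselLaplaceDeriv]
  ring

lemma hasDerivAt_besselLaplaceDeriv {ν : ℂ} (hν : ν.re = 0) {r : ℝ} (hr : 0 < r) :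
    HasDerivAt (besselLaplaceDeriv ν) (ν ^ 2 * besselLaplace ν r) r := by
  have hcosh : (cosh r : ℂ) ^ 2 = sinh r ^ 2 + 1 := by exact_mod_cast cosh_sq r
  refine (((hasDerivAt_sinh r).ofReal_comp.mul
    (hasDerivAt_laplaceMoment_besselJ_sinh hν 0 hr)).sub
    (((hasDerivAt_cosh r).ofReal_comp.pow 2).mul
      (hasDerivAt_laplaceMoment_besselJ_sinh hν 1 hr))).congr_deriv ?_
  have hode := laplaceMoment_besselJ_ode hν (sinh_pos_iff.mpr hr)
  simp only [besselLaplace, Nat.cast_ofNat, zero_add, Nat.reduceAdd, Nat.add_one_sub_one, pow_one,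
    Pi.pow_apply]
  linear_combination (cosh r : ℂ) * hode +
    cosh r * laplaceMoment (besselJ ν) 2 (sinh r) * hcosh

lemma tendsto_besselLaplace {ν : ℂ} (hν : ν.re = 0) :
    Tendsto (fun r => besselLaplace ν r * Complex.exp (ν * log (2 * sinh r))) atTop (𝓝 1) := by
  have hΓ : Complex.Gamma (ν + 1) ≠ 0 := Complex.Gamma_ne_zero_of_re_pos (by simp [hν])
  have hM := (tendsto_laplaceMoment_besselJ hν 0).comp tendsto_sinh_atTop
  have hcoth := (Complex.continuous_ofReal.tendsto 1).comp tendsto_cosh_div_sinh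
  have h := hcoth.mul hM
  rw [Nat.cast_zero, add_zero, div_self hΓ, Complex.ofReal_one, one_mul] at h
  refine h.congr' ?_
  filter_upwards [eventually_gt_atTop 0] with r hr
  have : (sinh r : ℂ) ≠ 0 := by exact_mod_cast (sinh_pos_iff.mpr hr).ne'
  simp only [besselLaplace, Function.comp_apply, Complex.ofReal_div, zero_add, pow_one]
  field_simp

lemma tendsto_besselLaplaceDeriv {ν : ℂ} (hν : ν.re = 0) :
    Tendsto (fun r => besselLaplaceDeriv ν r * Complex.exp (ν * log (2 * sinh r))) atTop
      (𝓝 (-ν)) := by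
  have hre : 0 < (ν + 1).re := by simp [hν]
  have hΓ : Complex.Gamma (ν + 1) ≠ 0 := Complex.Gamma_ne_zero_of_re_pos hre
  have hΓ' : Complex.Gamma (ν + (1 : ℕ) + 1) / Complex.Gamma (ν + 1) = ν + 1 := by
    rw [Nat.cast_one, Complex.Gamma_add_one _ (Complex.ne_zero_of_re_pos hre),
      mul_div_cancel_right₀ _ hΓ]
  have hM₀ := (tendsto_laplaceMoment_besselJ hν 0).comp tendsto_sinh_atTop
  have hM₁ := (tendsto_laplaceMoment_besselJ hν 1).comp tendsto_sinh_atTop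
  have hcoth := (Complex.continuous_ofReal.tendsto 1).comp tendsto_cosh_div_sinh_sq
  have h := hM₀.sub (hcoth.mul hM₁)
  rw [hΓ', Nat.cast_zero, add_zero, div_self hΓ, Complex.ofReal_one, one_mul,
    sub_add_cancel_right] at h
  refine h.congr' ?_
  filter_upwards [eventually_gt_atTop 0] with r hr
  have : (sinh r : ℂ) ≠ 0 := by exact_mod_cast (sinh_pos_iff.mpr hr).ne'
  simp only [besselLaplaceDeriv, Function.comp_apply, Complex.ofReal_div, Complex.ofReal_pow,
    zero_add, pow_one, Nat.reduceAdd]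
  field_simp

-- The factor `y' + ν y` solves the first-order equation `z' = ν z`, hence has constant modulus; as
-- it vanishes at infinity, it is zero.
lemma besselLaplaceDeriv_eq_neg_mul {ν : ℂ} (hν : ν.re = 0) {r : ℝ} (hr : 0 < r) :
    besselLaplaceDeriv ν r = -ν * besselLaplace ν r := by
  obtain ⟨A, hA⟩ := exists_eq_mul_exp_of_hasDerivAt (c := ν)
    (f := fun r => besselLaplaceDeriv ν r + ν * besselLaplace ν r) fun r hr =>
      ((hasDerivAt_besselLaplaceDeriv hν hr).add
        ((hasDerivAt_besselLaplace hν hr).const_mul ν)).congr_deriv (by ring)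
  have hlim := ((tendsto_besselLaplaceDeriv hν).add
    ((tendsto_besselLaplace hν).const_mul ν)).norm
  rw [mul_one, neg_add_cancel, norm_zero] at hlim
  have hA0 : ‖A‖ = 0 := by
    refine tendsto_nhds_unique (tendsto_const_nhds.congr' ?_) hlim
    filter_upwards [eventually_gt_atTop 0] with r hr
    rw [← mul_assoc, ← add_mul, hA r hr, norm_mul, norm_mul,
      norm_exp_mul_ofReal_of_re_eq_zero hν, norm_exp_mul_ofReal_of_re_eq_zero hν]
    simp
  have h := hA r hr
  rw [norm_eq_zero.mp hA0, zero_mul] at h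
  linear_combination h

lemma besselLaplace_eq_exp {ν : ℂ} (hν : ν.re = 0) {r : ℝ} (hr : 0 < r) :
    besselLaplace ν r = Complex.exp (-ν * r) := by
  obtain ⟨B, hB⟩ := exists_eq_mul_exp_of_hasDerivAt (f := besselLaplace ν) (c := -ν) fun r hr =>
    (hasDerivAt_besselLaplace hν hr).congr_deriv (besselLaplaceDeriv_eq_neg_mul hν hr)
  have hphase := ((Complex.continuous_ofReal.tendsto 0).comp
    tendsto_sub_log_two_mul_sinh).const_mul (-ν) |>.cexp |>.const_mul B
  rw [Complex.ofReal_zero, mul_zero, Complex.exp_zero, mul_one] at hphase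
  have hB1 : B = 1 := by
    refine tendsto_nhds_unique (hphase.congr' ?_) (tendsto_besselLaplace hν)
    filter_upwards [eventually_gt_atTop 0] with r hr
    rw [hB r hr, mul_assoc, ← Complex.exp_add, Function.comp_apply, Complex.ofReal_sub]
    ring_nf
  rw [hB r hr, hB1, one_mul]

lemma integral_exp_neg_sinh_mul_smul_besselJ {ν : ℂ} (hν : ν.re = 0) {r : ℝ} (hr : 0 < r) :
    ∫ x in Set.Ioi 0, exp (-(sinh r * x)) • besselJ ν x = Complex.exp (-ν * r) / cosh r := by
  have hcosh : (cosh r : ℂ) ≠ 0 := by exact_mod_cast (cosh_pos r).ne'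
  have h := besselLaplace_eq_exp hν hr
  simp only [besselLaplace, laplaceMoment, pow_zero, one_mul] at h
  rw [eq_div_iff hcosh, mul_comm, h]

/-! ### The square of a Bessel function as an arcsine average -/

/-- The weight `1 / √(w(1 - w))` of the arcsine distribution on `(0, 1)`, of total mass `π`. -/
noncomputable def arcsineWeight (w : ℝ) : ℝ := (√w)⁻¹ * (√(1 - w))⁻¹

lemma arcsineWeight_nonneg (w : ℝ) : 0 ≤ arcsineWeight w := by
  unfold arcsineWeight
  positivity

lemma Gamma_add_natCast_add_one_ne_zero {s : ℂ} (hs : -1 < s.re) (k : ℕ) :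
    Complex.Gamma (s + k + 1) ≠ 0 := by
  refine Complex.Gamma_ne_zero_of_re_pos ?_
  simp only [Complex.add_re, Complex.natCast_re, Complex.one_re]
  linarith [(k.cast_nonneg : (0 : ℝ) ≤ k)]

lemma factorial_mul_choose_mul_Gamma {s : ℂ} (hs : -1 < s.re) (j : ℕ) :
    j.factorial * Ring.choose (s + j) j * Complex.Gamma (s + 1) = Complex.Gamma (s + j + 1) := by
  have hpoch := Ring.factorial_nsmul_multichoose_eq_ascPochhammer (s + 1) j
  have hratio := Complex.Gamma_add_nat_div_Gamma_eq (n := j) (s + 1) fun k h => by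
    have := congrArg Complex.re h
    simp only [Complex.add_re, Complex.one_re, Complex.neg_re, Complex.natCast_re] at this
    linarith [(k.cast_nonneg : (0 : ℝ) ≤ k)]
  have hΓ : Complex.Gamma (s + 1) ≠ 0 := by
    simpa using Gamma_add_natCast_add_one_ne_zero hs 0
  rw [Polynomial.ascPochhammer_smeval_eq_eval, nsmul_eq_mul, ← hratio] at hpoch
  rw [Ring.choose, show s + j - j + 1 = s + 1 by ring, hpoch, div_mul_cancel₀ _ hΓ]
  ring_nf

lemma inv_factorial_mul_Gamma_eq_choose_div {ν : ℂ} (hν : -1 < ν.re) (j k : ℕ) :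
    ((j.factorial : ℂ) * Complex.Gamma (ν + k + 1))⁻¹ =
      Ring.choose (ν + (j + k : ℕ)) j / Complex.Gamma (ν + (j + k : ℕ) + 1) := by
  have hk : -1 < (ν + k).re := by
    simpa using by linarith [(k.cast_nonneg : (0 : ℝ) ≤ k)]
  have h := factorial_mul_choose_mul_Gamma hk j
  rw [show ν + k + j = ν + (j + k : ℕ) by push_cast; ring] at h
  have hj : (j.factorial : ℂ) ≠ 0 := Nat.cast_ne_zero.mpr j.factorial_ne_zero
  have hΓ := Gamma_add_natCast_add_one_ne_zero hν k
  have hΓ' := Gamma_add_natCast_add_one_ne_zero hν (j + k)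
  field_simp
  linear_combination -h

-- The convolution is evaluated by the Chu–Vandermonde identity.
lemma sum_antidiagonal_besselCoeff {ν : ℂ} (hν : -(1 / 2) < ν.re) (m : ℕ) :
    ∑ p ∈ Finset.HasAntidiagonal.antidiagonal m, besselCoeff ν p.1 * besselCoeff ν p.2 =
      besselCoeff (2 * ν) m *
        (Complex.Gamma (2 * (ν + m) + 1) / Complex.Gamma (ν + m + 1) ^ 2) := by
  have hν₁ : -1 < ν.re := by linarith
  have h2ν : -1 < (2 * ν).re := by simp; linarith
  have hterm : ∀ p ∈ Finset.HasAntidiagonal.antidiagonal m, besselCoeff ν p.1 * besselCoeff ν p.2 =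
      (-1) ^ m / Complex.Gamma (ν + m + 1) ^ 2 *
        (Ring.choose (ν + m) p.1 * Ring.choose (ν + m) p.2) := by
    rintro ⟨j, k⟩ hp
    obtain rfl := Finset.HasAntidiagonal.mem_antidiagonal.mp hp
    have hj := inv_factorial_mul_Gamma_eq_choose_div hν₁ j k
    have hk := inv_factorial_mul_Gamma_eq_choose_div hν₁ k j
    rw [add_comm k j] at hk
    rw [mul_inv, div_eq_mul_inv] at hj hk
    simp only [besselCoeff, div_eq_mul_inv, mul_inv, pow_add]
    linear_combination (-1) ^ j * (-1) ^ k * ((k.factorial : ℂ)⁻¹ *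
        (Complex.Gamma (ν + j + 1))⁻¹ * hj + Ring.choose (ν + (j + k : ℕ)) j *
        (Complex.Gamma (ν + (j + k : ℕ) + 1))⁻¹ * hk)
  have hm := inv_factorial_mul_Gamma_eq_choose_div h2ν m m
  rw [show 2 * ν + (m + m : ℕ) = 2 * (ν + m) by push_cast; ring] at hm
  have hΓ : Complex.Gamma (2 * (ν + m) + 1) ≠ 0 := by
    rw [show 2 * (ν + m) + 1 = 2 * ν + (m + m : ℕ) + 1 by push_cast; ring]
    exact Gamma_add_natCast_add_one_ne_zero h2ν (m + m)
  rw [Finset.sum_congr rfl hterm, ← Finset.mul_sum, ← Ring.add_choose_eq m (Commute.all _ _),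
    ← two_mul, besselCoeff, div_eq_mul_inv _ ((m.factorial : ℂ) * _), hm]
  generalize Complex.Gamma (2 * (ν + m) + 1) = Γ₂ at *
  field_simp

lemma hasSum_besselClifford_sq {ν : ℂ} (hν : -(1 / 2) < ν.re) (z : ℂ) :
    HasSum (fun m : ℕ => besselCoeff (2 * ν) m *
      (Complex.Gamma (2 * (ν + m) + 1) / Complex.Gamma (ν + m + 1) ^ 2) * z ^ m)
      (besselClifford ν z ^ 2) := by
  have hnorm := summable_norm_besselCoeff_mul_pow ν z
  have hterm (m : ℕ) : ∑ p ∈ Finset.HasAntidiagonal.antidiagonal m,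
      besselCoeff ν p.1 * z ^ p.1 * (besselCoeff ν p.2 * z ^ p.2) = besselCoeff (2 * ν) m *
        (Complex.Gamma (2 * (ν + m) + 1) / Complex.Gamma (ν + m + 1) ^ 2) * z ^ m := by
    rw [← sum_antidiagonal_besselCoeff hν, Finset.sum_mul]
    refine Finset.sum_congr rfl fun p hp => ?_
    rw [← Finset.HasAntidiagonal.mem_antidiagonal.mp hp, pow_add]
    ring
  rw [sq, besselClifford, tsum_mul_tsum_eq_tsum_sum_antidiagonal_of_summable_norm hnorm hnorm]
  simp only [← hterm]
  exact (summable_sum_mul_antidiagonal_of_summable_mul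
    (summable_mul_of_summable_norm hnorm hnorm)).hasSum

lemma betaIntegrand_eq_arcsineWeight_smul (s : ℂ) {w : ℝ} (hw : w ∈ Set.Ioo 0 1) :
    (w : ℂ) ^ (s + 1 / 2 - 1) * (1 - (w : ℂ)) ^ ((1 / 2 : ℂ) - 1) =
      arcsineWeight w • Complex.exp (s * log w) := by
  have hw₀ : (w : ℂ) ≠ 0 := by exact_mod_cast hw.1.ne'
  have hhalf (y : ℝ) (hy : 0 ≤ y) : (y : ℂ) ^ ((1 / 2 : ℂ) - 1) = ((√y)⁻¹ : ℝ) := by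
    rw [show (1 / 2 : ℂ) - 1 = (-(1 / 2) : ℝ) by push_cast; ring, ← Complex.ofReal_cpow hy,
      rpow_neg hy, ← sqrt_eq_rpow]
  rw [add_sub_assoc, Complex.cpow_add _ _ hw₀, hhalf w hw.1.le, ← Complex.ofReal_one,
    ← Complex.ofReal_sub, Complex.ofReal_one, hhalf _ (sub_nonneg.mpr hw.2.le),
    Complex.cpow_def_of_ne_zero hw₀, ← Complex.ofReal_log hw.1.le, arcsineWeight,
    Complex.real_smul, mul_comm s]
  push_cast
  ring

lemma integrableOn_arcsineWeight_smul_exp {s : ℂ} (hs : -(1 / 2) < s.re) :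
    IntegrableOn (fun w => arcsineWeight w • Complex.exp (s * log w)) (Set.Ioo 0 1) := by
  have h := Complex.betaIntegral_convergent (u := s + 1 / 2) (v := 1 / 2)
    (by simpa using by linarith) (by norm_num)
  rw [intervalIntegrable_iff_integrableOn_Ioo_of_le zero_le_one] at h
  exact h.congr_fun (fun w hw => betaIntegrand_eq_arcsineWeight_smul s hw) measurableSet_Ioo

lemma integrableOn_arcsineWeight : IntegrableOn arcsineWeight (Set.Ioo 0 1) := by
  have h := (integrableOn_arcsineWeight_smul_exp (s := 0) (by norm_num)).norm
  refine h.congr (.of_forall fun w => ?_)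
  simp [abs_of_nonneg (arcsineWeight_nonneg w)]

-- The Beta integral `B(s + 1/2, 1/2)`, rewritten with Legendre's duplication formula.
lemma integral_arcsineWeight_smul_exp {s : ℂ} (hs : -(1 / 2) < s.re) :
    ∫ w in Set.Ioo 0 1, arcsineWeight w • Complex.exp (s * log w) =
      π * (Complex.Gamma (2 * s + 1) / Complex.Gamma (s + 1) ^ 2) *
        Complex.exp (-(2 * s * log 2)) := by
  have hΓ : Complex.Gamma (s + 1) ≠ 0 := by
    simpa using Gamma_add_natCast_add_one_ne_zero (s := s) (by linarith) 0
  have hbeta := Complex.Gamma_mul_Gamma_eq_betaIntegral (s := s + 1 / 2) (t := 1 / 2)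
    (by simpa using by linarith) (by norm_num)
  have hdup := Complex.Gamma_mul_Gamma_add_half (s + 1 / 2)
  have hpi : (π : ℂ) = (√π : ℂ) * (√π : ℂ) := by
    rw [← Complex.ofReal_mul, mul_self_sqrt pi_pos.le]
  have hsqrt : Complex.Gamma (1 / 2) = (√π : ℂ) := by
    rw [Complex.Gamma_one_half_eq, sqrt_eq_rpow, Complex.ofReal_cpow pi_pos.le]
    norm_num
  have htwo : (2 : ℂ) ^ (1 - 2 * (s + 1 / 2)) = Complex.exp (-(2 * s * log 2)) := by
    rw [Complex.cpow_def_of_ne_zero two_ne_zero, Complex.ofReal_log two_pos.le]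
    push_cast
    ring_nf
  rw [show s + 1 / 2 + 1 / 2 = s + 1 by ring, hsqrt, Complex.betaIntegral,
    intervalIntegral.integral_of_le zero_le_one, integral_Ioc_eq_integral_Ioo,
    setIntegral_congr_fun measurableSet_Ioo
      fun w hw => betaIntegrand_eq_arcsineWeight_smul s hw] at hbeta
  rw [show s + 1 / 2 + 1 / 2 = s + 1 by ring, htwo, show 2 * (s + 1 / 2) = 2 * s + 1 by ring]
    at hdup
  rw [hpi]
  generalize Complex.exp (-(2 * s * log 2)) = E at *
  generalize Complex.Gamma (2 * s + 1) = Γ₂ at *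
  field_simp
  linear_combination (√π : ℂ) * hdup - Complex.Gamma (s + 1) * hbeta

lemma arcsineWeight_smul_besselJ_eq_tsum {ν : ℂ} {x w : ℝ} (hx : 0 < x) (hw : 0 < w) :
    arcsineWeight w • besselJ (2 * ν) (2 * x * √w) =
      ∑' k : ℕ, Complex.exp (2 * ν * log x) * (besselCoeff (2 * ν) k * ((x : ℂ) ^ 2) ^ k) *
        arcsineWeight w • Complex.exp ((ν + k) * log w) := by
  have hsqrt : 0 < √w := sqrt_pos.mpr hw
  have hphase : Complex.exp (2 * ν * log (x * √w)) =
      Complex.exp (2 * ν * log x) * Complex.exp (ν * log w) := by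
    rw [← Complex.exp_add, log_mul hx.ne' hsqrt.ne', log_sqrt hw.le]
    push_cast
    ring_nf
  have hpow (k : ℕ) : Complex.exp (k * log w) = (w : ℂ) ^ k := by
    rw [Complex.exp_nat_mul, ← Complex.ofReal_exp, exp_log hw]
  have hsq : ((2 * x * √w : ℝ) / 2 : ℂ) ^ 2 = x ^ 2 * w := by
    rw [← Complex.ofReal_ofNat, ← Complex.ofReal_div, ← Complex.ofReal_pow,
      show (2 * x * √w / 2) ^ 2 = x ^ 2 * √w ^ 2 by ring, sq_sqrt hw.le]
    push_cast
    rfl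
  rw [besselJ_eq_exp_mul_besselClifford _ (by positivity), hsq,
    show 2 * x * √w / 2 = x * √w by ring, hphase, besselClifford, Complex.real_smul,
    ← tsum_mul_left, ← tsum_mul_left]
  refine tsum_congr fun k => ?_
  rw [add_mul, Complex.exp_add, hpow, Complex.real_smul, mul_pow]
  ring

lemma integral_norm_arcsineWeight_smul_exp_le {ν : ℂ} (hν : -(1 / 2) < ν.re) (k : ℕ) :
    ∫ w in Set.Ioo 0 1, ‖arcsineWeight w • Complex.exp ((ν + k) * log w)‖ ≤
      ∫ w in Set.Ioo 0 1, ‖arcsineWeight w • Complex.exp (ν * log w)‖ := by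
  refine setIntegral_mono_on (integrableOn_arcsineWeight_smul_exp ?_).norm
    (integrableOn_arcsineWeight_smul_exp hν).norm measurableSet_Ioo fun w hw => ?_
  · simpa using by linarith [(k.cast_nonneg : (0 : ℝ) ≤ k)]
  · simp only [norm_smul, Complex.norm_exp, Complex.re_mul_ofReal, Complex.add_re,
      Complex.natCast_re]
    refine mul_le_mul_of_nonneg_left (exp_le_exp.mpr ?_) (norm_nonneg _)
    nlinarith [log_nonpos hw.1.le hw.2.le, (k.cast_nonneg : (0 : ℝ) ≤ k)]

/-- Neumann's formula `J_ν(x)² = (2/π) ∫₀^{π/2} J_{2ν}(2x sin θ) dθ`, written in the variable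
`w = sin² θ`. -/
lemma besselJ_sq_eq_integral {ν : ℂ} (hν : -(1 / 2) < ν.re) {x : ℝ} (hx : 0 < x) :
    besselJ ν x ^ 2 =
      (π : ℂ)⁻¹ * ∫ w in Set.Ioo 0 1, arcsineWeight w • besselJ (2 * ν) (2 * x * √w) := by
  have hνk (k : ℕ) : -(1 / 2) < (ν + k).re := by
    simpa using by linarith [(k.cast_nonneg : (0 : ℝ) ≤ k)]
  set c : ℕ → ℂ := fun k => Complex.exp (2 * ν * log x) *
    (besselCoeff (2 * ν) k * ((x : ℂ) ^ 2) ^ k)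
  have hsummable : Summable fun k => ∫ w in Set.Ioo 0 1,
      ‖c k * arcsineWeight w • Complex.exp ((ν + k) * log w)‖ := by
    simp only [norm_mul (c _), integral_const_mul]
    refine .of_nonneg_of_le (fun k => by positivity) (fun k => mul_le_mul_of_nonneg_left
      (integral_norm_arcsineWeight_smul_exp_le hν k) (norm_nonneg _)) (.mul_right _ ?_)
    simpa only [c, norm_mul (Complex.exp _)] using
      (summable_norm_besselCoeff_mul_pow (2 * ν) (x ^ 2)).mul_left ‖Complex.exp (2 * ν * log x)‖
  have hseries := hasSum_integral_of_summable_integral_norm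
    (fun k => (integrableOn_arcsineWeight_smul_exp (hνk k)).const_mul (c k)) hsummable
  have hsquare := (hasSum_besselClifford_sq hν ((x / 2 : ℂ) ^ 2)).mul_left
    (Complex.exp (ν * log (x / 2)) ^ 2)
  rw [setIntegral_congr_fun measurableSet_Ioo
    fun w hw => arcsineWeight_smul_besselJ_eq_tsum hx hw.1]
  rw [besselJ_eq_exp_mul_besselClifford ν hx, mul_pow, ← hsquare.tsum_eq, ← hseries.tsum_eq,
    ← tsum_mul_left]
  refine tsum_congr fun k => ?_
  have hphase : Complex.exp (ν * log (x / 2)) ^ 2 =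
      Complex.exp (2 * ν * log x) * Complex.exp (-(2 * ν * log 2)) := by
    rw [sq, ← Complex.exp_add, ← Complex.exp_add, log_div hx.ne' two_ne_zero]
    push_cast
    ring_nf
  have hpow : Complex.exp (-(2 * (ν + k) * log 2)) =
      Complex.exp (-(2 * ν * log 2)) / (2 ^ 2) ^ k := by
    have htwo : (2 : ℂ) = Complex.exp (log 2) := by
      rw [← Complex.ofReal_exp, exp_log two_pos, Complex.ofReal_ofNat]
    rw [show ((2 : ℂ) ^ 2) ^ k = Complex.exp (2 * k * log 2) by
      rw [← pow_mul, htwo, ← Complex.exp_nat_mul, ← htwo]; push_cast; rfl, ← Complex.exp_sub]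
    ring_nf
  rw [integral_const_mul, integral_arcsineWeight_smul_exp (hνk k), hphase, hpow, div_pow, div_pow]
  simp only [c]
  field_simp

/-! ### The Struve kernel -/

lemma image_sinh_Ioi_zero : sinh '' Set.Ioi 0 = Set.Ioi 0 := by
  simpa using sinhOrderIso.image_Ioi 0

lemma integral_cosh_smul_comp_sinh_Ioi {E : Type*} [NormedAddCommGroup E] [NormedSpace ℝ E]
    (g : ℝ → E) :
    ∫ t in Set.Ioi 0, cosh t • g (sinh t) = ∫ s in Set.Ioi 0, g s := by
  have h := integral_image_eq_integral_abs_deriv_smul measurableSet_Ioi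
    (fun t _ => (hasDerivAt_sinh t).hasDerivWithinAt) (sinh_injective.injOn (s := Set.Ioi 0)) g
  simpa only [image_sinh_Ioi_zero, abs_of_pos (cosh_pos _)] using h.symm

/-- The kernel `x K₀ˢ(2xc) - 1/(πc)`; at `c = cosh u` it is the kernel of the integral `Ω_n`. -/
noncomputable def struveKernel (x c : ℝ) : ℝ := x * struveK0 (2 * x * c) - 1 / (π * c)

/-- The function `s / (c² + b²s²)^{3/2}`, whose Laplace transform represents the Struve kernel.
The scale `b` is free: the substitution `s ↦ b s` shows that it only rescales the transform. -/
noncomputable def struveDensity (b c s : ℝ) : ℝ := s / √(c ^ 2 + b ^ 2 * s ^ 2) ^ 3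

lemma struveDensity_nonneg (b c : ℝ) {s : ℝ} (hs : 0 ≤ s) : 0 ≤ struveDensity b c s := by
  unfold struveDensity
  positivity

lemma le_sqrt_sq_add (b c s : ℝ) : c ≤ √(c ^ 2 + b ^ 2 * s ^ 2) :=
  le_sqrt_of_sq_le (by nlinarith [sq_nonneg (b * s)])

lemma sqrt_sq_add_pos {c : ℝ} (hc : 0 < c) (b s : ℝ) : 0 < √(c ^ 2 + b ^ 2 * s ^ 2) :=
  hc.trans_le (le_sqrt_sq_add b c s)

lemma continuous_struveDensity (b : ℝ) {c : ℝ} (hc : 0 < c) : Continuous (struveDensity b c) :=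
  continuous_id.div (by fun_prop) fun s => (pow_pos (sqrt_sq_add_pos hc b s) 3).ne'

lemma norm_struveDensity_le {b c : ℝ} (hb : 0 < b) (hc : 0 < c) (s : ℝ) :
    ‖struveDensity b c s‖ ≤ (b * c ^ 2)⁻¹ := by
  have hR := sqrt_sq_add_pos hc b s
  have hbs : b * |s| ≤ √(c ^ 2 + b ^ 2 * s ^ 2) := by
    rw [← abs_of_pos hb, ← abs_mul, abs_of_pos hb]
    exact abs_le_sqrt (by nlinarith [sq_nonneg c])
  have hc2 := pow_le_pow_left₀ hc.le (le_sqrt_sq_add b c s) 2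
  rw [struveDensity, norm_div, norm_of_nonneg (pow_pos hR 3).le, norm_eq_abs,
    ← one_div, div_le_div_iff₀ (by positivity) (by positivity)]
  calc |s| * (b * c ^ 2) = b * |s| * c ^ 2 := by ring
    _ ≤ √(c ^ 2 + b ^ 2 * s ^ 2) * √(c ^ 2 + b ^ 2 * s ^ 2) ^ 2 := by gcongr
    _ = 1 * √(c ^ 2 + b ^ 2 * s ^ 2) ^ 3 := by ring

lemma integrableOn_exp_neg_mul_struveDensity {b c p : ℝ} (hb : 0 < b) (hc : 0 < c) (hp : 0 < p) :
    IntegrableOn (fun s => exp (-(p * s)) * struveDensity b c s) (Set.Ioi 0) :=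
  (integrableOn_exp_neg_mul_Ioi hp).mul_bdd (c := (b * c ^ 2)⁻¹)
    (continuous_struveDensity b hc).aestronglyMeasurable
    (.of_forall fun s => norm_struveDensity_le hb hc s)

lemma integrableOn_exp_neg_mul_div_sqrt (b : ℝ) {c p : ℝ} (hc : 0 < c) (hp : 0 < p) :
    IntegrableOn (fun s => exp (-(p * s)) / √(c ^ 2 + b ^ 2 * s ^ 2)) (Set.Ioi 0) := by
  refine (integrableOn_exp_neg_mul_Ioi hp).mul_bdd (c := c⁻¹) ?_ (.of_forall fun s => ?_)
  · exact (Continuous.inv₀ (by fun_prop) fun s =>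
      (sqrt_sq_add_pos hc b s).ne').aestronglyMeasurable
  · rw [norm_inv, norm_of_nonneg (sqrt_nonneg _)]
    exact inv_anti₀ hc (le_sqrt_sq_add b c s)

lemma integral_exp_neg_mul_div_sqrt {b c : ℝ} (hb : 0 < b) (hc : 0 < c) (x : ℝ) :
    ∫ s in Set.Ioi 0, exp (-(2 * b * x * s)) / √(c ^ 2 + b ^ 2 * s ^ 2) =
      π / (2 * b) * struveK0 (2 * x * c) := by
  have hsinh (t : ℝ) : cosh t • (exp (-(2 * x * c) * sinh t) / √(1 + sinh t ^ 2)) =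
      exp (-(2 * x * c) * sinh t) := by
    rw [add_comm, ← cosh_sq, sqrt_sq (cosh_pos t).le, smul_eq_mul,
      mul_div_cancel₀ _ (cosh_pos t).ne']
  have hscale (s : ℝ) : exp (-(2 * x * c) * (b / c * s)) / √(1 + (b / c * s) ^ 2) =
      c * (exp (-(2 * b * x * s)) / √(c ^ 2 + b ^ 2 * s ^ 2)) := by
    have hsqrt : √(1 + (b / c * s) ^ 2) = √(c ^ 2 + b ^ 2 * s ^ 2) / c := by
      rw [show 1 + (b / c * s) ^ 2 = (c ^ 2 + b ^ 2 * s ^ 2) / c ^ 2 by field_simp,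
        sqrt_div' _ (sq_nonneg c), sqrt_sq hc.le]
    rw [hsqrt, show -(2 * x * c) * (b / c * s) = -(2 * b * x * s) by field_simp]
    field_simp
  have h := integral_comp_mul_left_Ioi
    (fun s => exp (-(2 * x * c) * s) / √(1 + s ^ 2)) 0 (div_pos hb hc)
  rw [mul_zero, ← integral_cosh_smul_comp_sinh_Ioi
    fun s => exp (-(2 * x * c) * s) / √(1 + s ^ 2)] at h
  simp only [hsinh, hscale, integral_const_mul, smul_eq_mul] at h
  rw [inv_div, div_mul_eq_mul_div, mul_div_assoc] at h
  rw [struveK0, mul_left_cancel₀ hc.ne' h]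
  field_simp

lemma hasDerivAt_exp_neg_mul_div_sqrt (b p s : ℝ) {c : ℝ} (hc : 0 < c) :
    HasDerivAt (fun s => exp (-(p * s)) / √(c ^ 2 + b ^ 2 * s ^ 2))
      (-(p * (exp (-(p * s)) / √(c ^ 2 + b ^ 2 * s ^ 2)) +
        b ^ 2 * (exp (-(p * s)) * struveDensity b c s))) s := by
  have hR := sqrt_sq_add_pos hc b s
  have hquad : HasDerivAt (fun s => c ^ 2 + b ^ 2 * s ^ 2) (b ^ 2 * (2 * s)) s := by
    simpa using ((hasDerivAt_pow 2 s).const_mul (b ^ 2)).const_add (c ^ 2)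
  have hexp := ((hasDerivAt_id s).const_mul p).neg.exp
  refine (hexp.div (hquad.sqrt (sqrt_pos.mp hR).ne') hR.ne').congr_deriv ?_
  simp only [struveDensity, id_eq, Pi.neg_apply]
  field_simp
  ring

-- Integrate `exp (-2bxs) / √(c² + b²s²)` by parts.
lemma struveKernel_eq_integral {b c x : ℝ} (hb : 0 < b) (hc : 0 < c) (hx : 0 < x) :
    struveKernel x c =
      -(b ^ 2 / π) * ∫ s in Set.Ioi 0, exp (-(2 * b * x * s)) * struveDensity b c s := by
  have hp : 0 < 2 * b * x := by positivity
  have hint := integrableOn_exp_neg_mul_div_sqrt b hc hp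
  have hint' := integrableOn_exp_neg_mul_struveDensity hb hc hp
  have hlim : Tendsto (fun s => exp (-(2 * b * x * s)) / √(c ^ 2 + b ^ 2 * s ^ 2)) atTop (𝓝 0) := by
    have hexp : Tendsto (fun s => exp (-(2 * b * x * s)) / c) atTop (𝓝 0) := by
      simpa using (tendsto_exp_neg_atTop_nhds_zero.comp
        (tendsto_id.const_mul_atTop hp)).div_const c
    refine squeeze_zero (fun s => by positivity) (fun s => ?_) hexp
    exact div_le_div_of_nonneg_left (exp_pos _).le hc (le_sqrt_sq_add b c s)
  have h := integral_Ioi_of_hasDerivAt_of_tendsto'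
    (fun s _ => hasDerivAt_exp_neg_mul_div_sqrt b (2 * b * x) s hc)
    ((hint.const_mul _).add (hint'.const_mul _)).neg hlim
  rw [integral_neg, integral_add (hint.const_mul _) (hint'.const_mul _), integral_const_mul,
    integral_const_mul, integral_exp_neg_mul_div_sqrt hb hc] at h
  simp only [mul_zero, neg_zero, exp_zero, ne_eq, OfNat.ofNat_ne_zero, not_false_eq_true,
    zero_pow, add_zero, sqrt_sq hc.le] at h
  rw [struveKernel]
  field_simp at h ⊢
  linear_combination -h

lemma struveDensity_anti {c d s : ℝ} (b : ℝ) (hc : 0 < c) (hcd : c ≤ d) (hs : 0 ≤ s) :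
    struveDensity b d s ≤ struveDensity b c s := by
  refine div_le_div_of_nonneg_left hs (pow_pos (sqrt_sq_add_pos hc b s) 3) ?_
  gcongr

lemma abs_struveKernel_anti {c d x : ℝ} (hc : 0 < c) (hcd : c ≤ d) (hx : 0 < x) :
    |struveKernel x d| ≤ |struveKernel x c| := by
  have hp : 0 < 2 * 1 * x := by positivity
  have habs {c : ℝ} (hc : 0 < c) : |struveKernel x c| =
      1 ^ 2 / π * ∫ s in Set.Ioi 0, exp (-(2 * 1 * x * s)) * struveDensity 1 c s := by
    rw [struveKernel_eq_integral one_pos hc hx, abs_mul, abs_neg, abs_of_nonneg (by positivity),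
      abs_of_nonneg (setIntegral_nonneg measurableSet_Ioi fun s hs =>
        mul_nonneg (exp_pos _).le (struveDensity_nonneg 1 c (le_of_lt hs)))]
  rw [habs hc, habs (hc.trans_le hcd)]
  refine mul_le_mul_of_nonneg_left (setIntegral_mono_on
    (integrableOn_exp_neg_mul_struveDensity one_pos (hc.trans_le hcd) hp)
    (integrableOn_exp_neg_mul_struveDensity one_pos hc hp) measurableSet_Ioi fun s hs => ?_)
    (by positivity)
  exact mul_le_mul_of_nonneg_left (struveDensity_anti 1 hc hcd (le_of_lt hs)) (exp_pos _).le

lemma measurable_struveKernel : Measurable (Function.uncurry struveKernel) := by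
  have h : StronglyMeasurable fun p : ℝ × ℝ =>
      ∫ t in Set.Ioi 0, exp (-(2 * p.1 * p.2) * sinh t) :=
    StronglyMeasurable.integral_prod_right
      (f := fun (p : ℝ × ℝ) (t : ℝ) => exp (-(2 * p.1 * p.2) * sinh t))
      (Continuous.stronglyMeasurable (by unfold Function.uncurry; fun_prop))
  have hm := h.measurable
  unfold Function.uncurry struveKernel struveK0
  fun_prop

lemma integrable_inv_sqrt_sq_add_cube {b c : ℝ} (hb : 0 < b) (hc : 0 < c) :
    Integrable fun s => (√(c ^ 2 + b ^ 2 * s ^ 2) ^ 3)⁻¹ := by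
  have hbound := (integrable_inv_one_add_sq.comp_mul_left' (div_pos hb hc).ne').const_mul (c ^ 3)⁻¹
  refine hbound.mono' ?_ (.of_forall fun s => ?_)
  · exact (Continuous.inv₀ (by fun_prop) fun s =>
      (pow_pos (sqrt_sq_add_pos hc b s) 3).ne').aestronglyMeasurable
  · rw [norm_of_nonneg (by positivity), ← mul_inv]
    refine inv_anti₀ (by positivity) ?_
    calc c ^ 3 * (1 + (b / c * s) ^ 2) = c * (c ^ 2 + b ^ 2 * s ^ 2) := by field_simp
      _ = c * √(c ^ 2 + b ^ 2 * s ^ 2) ^ 2 := by rw [sq_sqrt (by positivity)]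
      _ ≤ √(c ^ 2 + b ^ 2 * s ^ 2) * √(c ^ 2 + b ^ 2 * s ^ 2) ^ 2 := by
        gcongr
        exact le_sqrt_sq_add b c s
      _ = √(c ^ 2 + b ^ 2 * s ^ 2) ^ 3 := by ring

lemma integrable_prod_exp_neg_mul_struveDensity {b c : ℝ} (hb : 0 < b) (hc : 0 < c) :
    Integrable (fun q : ℝ × ℝ => exp (-(2 * b * q.1 * q.2)) * struveDensity b c q.2)
      ((volume.restrict (Set.Ioi 0)).prod (volume.restrict (Set.Ioi 0))) := by
  have hcont := continuous_struveDensity b hc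
  have hmeas : AEStronglyMeasurable
      (fun q : ℝ × ℝ => exp (-(2 * b * q.1 * q.2)) * struveDensity b c q.2)
      ((volume.restrict (Set.Ioi 0)).prod (volume.restrict (Set.Ioi 0))) := by fun_prop
  have hcomm (s x : ℝ) : 2 * b * x * s = 2 * b * s * x := by ring
  simp only [integrable_prod_iff' hmeas, norm_mul, integral_mul_const,
    norm_of_nonneg (exp_pos _).le]
  refine ⟨?_, ((integrable_inv_sqrt_sq_add_cube hb hc).integrableOn.const_mul (2 * b)⁻¹).congr ?_⟩
  all_goals filter_upwards [ae_restrict_mem measurableSet_Ioi] with s (hs : 0 < s)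
  · simp only [hcomm s]
    exact (integrableOn_exp_neg_mul_Ioi (by positivity)).mul_const _
  · have hexp := integral_exp_mul_Ioi (a := -(2 * b * s)) (by simpa using by positivity) 0
    simp only [neg_mul] at hexp
    rw [norm_of_nonneg (struveDensity_nonneg b c hs.le), struveDensity]
    simp only [hcomm s, hexp, mul_zero, neg_zero, exp_zero]
    field_simp

lemma integrableOn_struveKernel {c : ℝ} (hc : 0 < c) :
    IntegrableOn (fun x => struveKernel x c) (Set.Ioi 0) := by
  refine ((integrable_prod_exp_neg_mul_struveDensity one_pos hc).integral_prod_left.const_mul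
    (-(1 ^ 2 / π))).congr ?_
  filter_upwards [ae_restrict_mem measurableSet_Ioi] with x hx
  rw [struveKernel_eq_integral one_pos hc hx]

/-! ### The Fourier transform of the hyperbolic secant -/

lemma abs_deriv_sigmoid_smul_betaIntegrand (u : ℂ) (x : ℝ) :
    |sigmoid x * (1 - sigmoid x)| •
        ((sigmoid x : ℂ) ^ (u - 1) * (1 - (sigmoid x : ℂ)) ^ (1 - u - 1)) =
      sigmoid (-x) • Complex.exp (u * x) := by
  have hσ := sigmoid_pos x
  have hσ' := sigmoid_pos (-x)
  have hlog : log (sigmoid (-x)) = log (sigmoid x) - x := by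
    rw [← sigmoid_mul_rexp_neg, log_mul hσ.ne' (exp_pos _).ne', log_exp, sub_eq_add_neg]
  rw [← Complex.ofReal_one, ← Complex.ofReal_sub, ← sigmoid_neg, Complex.ofReal_one,
    Complex.cpow_def_of_ne_zero (by exact_mod_cast hσ.ne'),
    Complex.cpow_def_of_ne_zero (by exact_mod_cast hσ'.ne'), ← Complex.ofReal_log hσ.le,
    ← Complex.ofReal_log hσ'.le, hlog, ← Complex.exp_add, abs_of_pos (by positivity),
    show log (sigmoid x) * (u - 1) + ((log (sigmoid x) - x : ℝ) : ℂ) * (1 - u - 1) =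
      u * x - log (sigmoid x) by push_cast; ring, Complex.exp_sub, ← Complex.ofReal_exp,
    exp_log hσ, Complex.real_smul, Complex.real_smul, Complex.ofReal_mul]
  field_simp [Complex.ofReal_ne_zero.mpr hσ.ne']

lemma integrable_sigmoid_neg_smul_exp {u : ℂ} (hu : 0 < u.re) (hu' : u.re < 1) :
    Integrable fun x : ℝ => sigmoid (-x) • Complex.exp (u * x) := by
  have h := Complex.betaIntegral_convergent hu (v := 1 - u) (by simpa using hu')
  rwa [intervalIntegrable_iff_integrableOn_Ioo_of_le zero_le_one, ← range_sigmoid,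
    ← Set.image_univ, integrableOn_image_iff_integrableOn_abs_deriv_smul .univ
      (fun x _ => (hasDerivAt_sigmoid x).hasDerivWithinAt) sigmoid_injective.injOn,
    integrableOn_univ, funext (abs_deriv_sigmoid_smul_betaIntegrand u)] at h

lemma integral_sigmoid_neg_smul_exp {u : ℂ} (hu : 0 < u.re) (hu' : u.re < 1) :
    ∫ x : ℝ, sigmoid (-x) • Complex.exp (u * x) = π / Complex.sin (π * u) := by
  have h := Complex.Gamma_mul_Gamma_eq_betaIntegral hu (t := 1 - u) (by simpa using hu')
  rw [Complex.Gamma_mul_Gamma_one_sub, add_sub_cancel, Complex.Gamma_one, one_mul,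
    Complex.betaIntegral, intervalIntegral.integral_of_le zero_le_one,
    integral_Ioc_eq_integral_Ioo, ← range_sigmoid, ← Set.image_univ,
    integral_image_eq_integral_abs_deriv_smul .univ
      (fun x _ => (hasDerivAt_sigmoid x).hasDerivWithinAt) sigmoid_injective.injOn,
    setIntegral_univ, funext (abs_deriv_sigmoid_smul_betaIntegrand u)] at h
  exact h.symm

lemma inv_cosh_smul_exp_eq (ν : ℂ) (w : ℝ) : (cosh w)⁻¹ • Complex.exp (2 * ν * w) =
    (2 : ℝ) • sigmoid (-(2 * w)) • Complex.exp ((1 / 2 + ν) * (2 * w : ℝ)) := by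
  have hcosh : (cosh w)⁻¹ = 2 * (sigmoid (-(2 * w)) * exp w) := by
    rw [cosh_eq, sigmoid_def, neg_neg, show 2 * w = w + w by ring, exp_add, exp_neg]
    field_simp
    ring
  rw [hcosh, show (1 / 2 + ν) * (2 * w : ℝ) = w + 2 * ν * w by push_cast; ring, Complex.exp_add]
  simp only [Complex.real_smul]
  push_cast
  ring

lemma integrable_inv_cosh_smul_exp {ν : ℂ} (hν : |ν.re| < 1 / 2) :
    Integrable fun w : ℝ => (cosh w)⁻¹ • Complex.exp (2 * ν * w) := by
  obtain ⟨hlow, hupp⟩ := abs_lt.mp hν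
  rw [funext (inv_cosh_smul_exp_eq ν)]
  exact ((integrable_sigmoid_neg_smul_exp (u := 1 / 2 + ν) (by simpa using by linarith)
    (by norm_num; linarith)).comp_mul_left' two_ne_zero).smul (2 : ℝ)

lemma integral_inv_cosh_smul_exp {ν : ℂ} (hν : |ν.re| < 1 / 2) :
    ∫ w : ℝ, (cosh w)⁻¹ • Complex.exp (2 * ν * w) = π / Complex.cos (π * ν) := by
  obtain ⟨hlow, hupp⟩ := abs_lt.mp hν
  rw [funext (inv_cosh_smul_exp_eq ν), integral_smul, Measure.integral_comp_mul_left
    (fun x : ℝ => sigmoid (-x) • Complex.exp ((1 / 2 + ν) * x)),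
    integral_sigmoid_neg_smul_exp (by simpa using by linarith) (by norm_num; linarith),
    show (π : ℂ) * (1 / 2 + ν) = π * ν + π / 2 by ring, Complex.sin_add_pi_div_two, smul_smul]
  norm_num

lemma integrable_inv_cosh : Integrable fun w => (cosh w)⁻¹ := by
  refine (integrable_inv_cosh_smul_exp (ν := 0) (by norm_num)).norm.congr (.of_forall fun w => ?_)
  change ‖(cosh w)⁻¹ • Complex.exp (2 * 0 * w)‖ = (cosh w)⁻¹
  rw [norm_smul, norm_of_nonneg (inv_pos.mpr (cosh_pos w)).le]
  simp

lemma cosh_sq_add_sinh_sq (u r : ℝ) : cosh u ^ 2 + sinh r ^ 2 = cosh (r - u) * cosh (r + u) := by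
  rw [cosh_sub, cosh_add]
  linear_combination -sinh r ^ 2 * cosh_sq u - cosh u ^ 2 * cosh_sq r

lemma sinh_div_cosh_sq_add_sinh_sq {u : ℝ} (hu : u ≠ 0) (r : ℝ) :
    sinh r / (cosh u ^ 2 + sinh r ^ 2) =
      (2 * sinh u)⁻¹ * ((cosh (r - u))⁻¹ - (cosh (r + u))⁻¹) := by
  have hsinh : sinh u ≠ 0 := sinh_ne_zero.mpr hu
  have hsub := (cosh_pos (r - u)).ne'
  have hadd := (cosh_pos (r + u)).ne'
  rw [cosh_sq_add_sinh_sq]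
  field_simp
  rw [cosh_sub, cosh_add]
  ring

lemma inv_cosh_add_smul_exp_eq (ν : ℂ) (u r : ℝ) : (cosh (r + u))⁻¹ • Complex.exp (2 * ν * r) =
    Complex.exp (-(2 * ν * u)) *
      (cosh (r + u))⁻¹ • Complex.exp (2 * ν * (r + u : ℝ)) := by
  rw [mul_smul_comm, ← Complex.exp_add]
  push_cast
  ring_nf

lemma integrable_inv_cosh_add_smul_exp {ν : ℂ} (hν : |ν.re| < 1 / 2) (u : ℝ) :
    Integrable fun r : ℝ => (cosh (r + u))⁻¹ • Complex.exp (2 * ν * r) := by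
  rw [funext (inv_cosh_add_smul_exp_eq ν u)]
  exact ((integrable_inv_cosh_smul_exp hν).comp_add_right u).const_mul _

lemma integral_inv_cosh_add_smul_exp {ν : ℂ} (hν : |ν.re| < 1 / 2) (u : ℝ) :
    ∫ r : ℝ, (cosh (r + u))⁻¹ • Complex.exp (2 * ν * r) =
      Complex.exp (-(2 * ν * u)) * (π / Complex.cos (π * ν)) := by
  rw [funext (inv_cosh_add_smul_exp_eq ν u), integral_const_mul, integral_add_right_eq_self
    (fun r : ℝ => (cosh r)⁻¹ • Complex.exp (2 * ν * r)) u, integral_inv_cosh_smul_exp hν]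

lemma sinh_div_smul_exp_eq (ν : ℂ) {u : ℝ} (hu : u ≠ 0) (r : ℝ) :
    (sinh r / (cosh u ^ 2 + sinh r ^ 2)) • Complex.exp (2 * ν * r) =
      (2 * sinh u)⁻¹ • ((cosh (r + -u))⁻¹ • Complex.exp (2 * ν * r) -
        (cosh (r + u))⁻¹ • Complex.exp (2 * ν * r)) := by
  rw [sinh_div_cosh_sq_add_sinh_sq hu, ← sub_smul, smul_smul, sub_eq_add_neg r]

lemma integrable_sinh_div_smul_exp {ν : ℂ} (hν : |ν.re| < 1 / 2) {u : ℝ} (hu : u ≠ 0) :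
    Integrable fun r : ℝ => (sinh r / (cosh u ^ 2 + sinh r ^ 2)) • Complex.exp (2 * ν * r) := by
  rw [funext (sinh_div_smul_exp_eq ν hu)]
  exact ((integrable_inv_cosh_add_smul_exp hν (-u)).sub
    (integrable_inv_cosh_add_smul_exp hν u)).smul (2 * sinh u)⁻¹

lemma integral_sinh_div_smul_exp {ν : ℂ} (hν : |ν.re| < 1 / 2) {u : ℝ} (hu : u ≠ 0) :
    ∫ r : ℝ, (sinh r / (cosh u ^ 2 + sinh r ^ 2)) • Complex.exp (2 * ν * r) =
      π * Complex.sinh (2 * ν * u) / (sinh u * Complex.cos (π * ν)) := by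
  rw [funext (sinh_div_smul_exp_eq ν hu), integral_smul, integral_sub
    (integrable_inv_cosh_add_smul_exp hν (-u)) (integrable_inv_cosh_add_smul_exp hν u),
    integral_inv_cosh_add_smul_exp hν, integral_inv_cosh_add_smul_exp hν, Complex.real_smul,
    Complex.ofReal_neg, mul_neg, neg_neg, Complex.sinh]
  push_cast
  field_simp

/-! ### The Struve kernel against squares of Bessel functions -/

lemma integral_exp_neg_mul_sinh_smul_besselJ {μ : ℂ} (hμ : μ.re = 0) {b r : ℝ} (hb : 0 < b)
    (hr : 0 < r) :
    ∫ x in Set.Ioi 0, exp (-(2 * b * x * sinh r)) • besselJ μ (2 * x * b) =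
      (2 * b)⁻¹ • (Complex.exp (-μ * r) / cosh r) := by
  have h := integral_comp_mul_left_Ioi (fun x => exp (-(sinh r * x)) • besselJ μ x) 0
    (b := 2 * b) (by positivity)
  rw [mul_zero, integral_exp_neg_sinh_mul_smul_besselJ hμ hr] at h
  rw [← h]
  congr 1 with x
  ring_nf

lemma aestronglyMeasurable_besselJ_comp_mul (μ : ℂ) {b : ℝ} (hb : 0 < b) :
    AEStronglyMeasurable (fun x => besselJ μ (2 * x * b)) (volume.restrict (Set.Ioi 0)) := by
  refine ((continuousOn_besselJ μ).comp (f := fun x : ℝ => 2 * x * b) (by fun_prop)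
    fun x (hx : 0 < x) => ?_).aestronglyMeasurable measurableSet_Ioi
  exact mul_pos (by positivity) hb

lemma integrable_prod_struveDensity_smul_besselJ {μ : ℂ} (hμ : μ.re = 0) {b c : ℝ} (hb : 0 < b)
    (hc : 0 < c) :
    Integrable (fun q : ℝ × ℝ =>
      (exp (-(2 * b * q.1 * q.2)) * struveDensity b c q.2) • besselJ μ (2 * q.1 * b))
      ((volume.restrict (Set.Ioi 0)).prod (volume.restrict (Set.Ioi 0))) := by
  refine (integrable_prod_exp_neg_mul_struveDensity hb hc).smul_bdd
    √(2 / ‖Complex.Gamma (μ + 1)‖ ^ 2) (aestronglyMeasurable_besselJ_comp_mul μ hb).comp_fst ?_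
  filter_upwards [Measure.quasiMeasurePreserving_fst.ae (ae_restrict_mem measurableSet_Ioi)]
    with q (hq : 0 < q.1)
  exact norm_besselJ_le hμ (by positivity)

lemma integral_struveKernel_smul_besselJ {μ : ℂ} (hμ : μ.re = 0) {b c : ℝ} (hb : 0 < b)
    (hc : 0 < c) :
    ∫ x in Set.Ioi 0, struveKernel x c • besselJ μ (2 * x * b) =
      -(b / (2 * π)) • ∫ r in Set.Ioi 0, struveDensity b c (sinh r) • Complex.exp (-μ * r) := by
  have hkernel : ∀ x ∈ Set.Ioi (0 : ℝ), struveKernel x c • besselJ μ (2 * x * b) =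
      -(b ^ 2 / π) • ∫ s in Set.Ioi 0,
        (exp (-(2 * b * x * s)) * struveDensity b c s) • besselJ μ (2 * x * b) := fun x hx => by
    rw [struveKernel_eq_integral hb hc hx, integral_smul_const, mul_smul]
  have hlaplace : ∀ r ∈ Set.Ioi (0 : ℝ), cosh r • ∫ x in Set.Ioi 0,
      (exp (-(2 * b * x * sinh r)) * struveDensity b c (sinh r)) • besselJ μ (2 * x * b) =
      (2 * b)⁻¹ • struveDensity b c (sinh r) • Complex.exp (-μ * r) := fun r hr => by
    have hcosh := Complex.ofReal_ne_zero.mpr (cosh_pos r).ne'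
    simp only [mul_comm (exp _) (struveDensity _ _ _), mul_smul, integral_smul,
      integral_exp_neg_mul_sinh_smul_besselJ hμ hb hr]
    simp only [Complex.real_smul]
    field_simp
  rw [setIntegral_congr_fun measurableSet_Ioi hkernel, integral_smul, integral_integral_swap
    (integrable_prod_struveDensity_smul_besselJ hμ hb hc), ← integral_cosh_smul_comp_sinh_Ioi
    fun s => ∫ x in Set.Ioi 0,
      (exp (-(2 * b * x * s)) * struveDensity b c s) • besselJ μ (2 * x * b),
    setIntegral_congr_fun measurableSet_Ioi hlaplace, integral_smul, smul_smul]
  congr 1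
  field_simp

lemma hasDerivAt_sqrt_one_sub_div_sqrt {c : ℝ} (hc : 0 < c) (s : ℝ) {w : ℝ}
    (hw : w ∈ Set.Ioo 0 1) :
    HasDerivAt (fun w => -2 / (c ^ 2 + s ^ 2) * (√(1 - w) / √(c ^ 2 + w * s ^ 2)))
      ((√(1 - w))⁻¹ * (√(c ^ 2 + w * s ^ 2) ^ 3)⁻¹) w := by
  obtain ⟨hw0, hw1⟩ := hw
  have hone : 0 < 1 - w := sub_pos.mpr hw1
  have hquad : 0 < c ^ 2 + w * s ^ 2 := by positivity
  have hone' : HasDerivAt (fun w : ℝ => 1 - w) (-1) w := (hasDerivAt_id w).const_sub 1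
  have hquad' : HasDerivAt (fun w : ℝ => c ^ 2 + w * s ^ 2) (s ^ 2) w := by
    simpa using ((hasDerivAt_id w).mul_const (s ^ 2)).const_add (c ^ 2)
  refine (((hone'.sqrt hone.ne').div (hquad'.sqrt hquad.ne')
    (sqrt_pos.mpr hquad).ne').const_mul _).congr_deriv ?_
  have hsq := sq_sqrt hone.le
  have hsq' := sq_sqrt hquad.le
  field_simp [(sqrt_pos.mpr hone).ne', (sqrt_pos.mpr hquad).ne']
  rw [hsq, mul_comm (s ^ 2) w, hsq']
  ring

lemma continuousOn_sqrt_one_sub_div_sqrt {c : ℝ} (hc : 0 < c) (s : ℝ) :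
    ContinuousOn (fun w => -2 / (c ^ 2 + s ^ 2) * (√(1 - w) / √(c ^ 2 + w * s ^ 2)))
      (Set.Icc 0 1) := by
  refine continuousOn_const.mul (ContinuousOn.div (by fun_prop) (by fun_prop) fun w hw => ?_)
  have := hw.1
  positivity

lemma integrableOn_inv_sqrt_one_sub_mul {c : ℝ} (hc : 0 < c) (s : ℝ) :
    IntegrableOn (fun w => (√(1 - w))⁻¹ * (√(c ^ 2 + w * s ^ 2) ^ 3)⁻¹) (Set.Ioc 0 1) :=
  intervalIntegral.integrableOn_deriv_of_nonneg (continuousOn_sqrt_one_sub_div_sqrt hc s)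
    (fun _ hw => hasDerivAt_sqrt_one_sub_div_sqrt hc s hw) fun _ _ => by positivity

lemma integral_inv_sqrt_one_sub_mul {c : ℝ} (hc : 0 < c) (s : ℝ) :
    ∫ w in Set.Ioo (0 : ℝ) 1, (√(1 - w))⁻¹ * (√(c ^ 2 + w * s ^ 2) ^ 3)⁻¹ =
      2 / (c * (c ^ 2 + s ^ 2)) := by
  rw [← integral_Ioc_eq_integral_Ioo, ← intervalIntegral.integral_of_le zero_le_one,
    intervalIntegral.integral_eq_sub_of_hasDerivAt_of_le zero_le_one
      (continuousOn_sqrt_one_sub_div_sqrt hc s)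
      (fun _ hw => hasDerivAt_sqrt_one_sub_div_sqrt hc s hw)
      ((intervalIntegrable_iff_integrableOn_Ioc_of_le zero_le_one).mpr
        (integrableOn_inv_sqrt_one_sub_mul hc s))]
  simp only [sub_self, sqrt_zero, zero_div, mul_zero, sub_zero, sqrt_one, zero_mul, add_zero,
    sqrt_sq hc.le, zero_sub]
  field_simp

lemma struveDensity_sqrt {c s w : ℝ} (hw : 0 ≤ w) :
    struveDensity (√w) c s = s * (√(c ^ 2 + w * s ^ 2) ^ 3)⁻¹ := by
  rw [struveDensity, sq_sqrt hw, div_eq_mul_inv]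

lemma integrable_sinh_div {c : ℝ} (hc : 0 < c) :
    Integrable fun r => sinh r / (c ^ 2 + sinh r ^ 2) := by
  refine (integrable_inv_cosh.const_mul ((1 + c ^ 2) / c ^ 2)).mono' ?_ (.of_forall fun r => ?_)
  · exact (Continuous.div (by fun_prop) (by fun_prop)
      fun r => by positivity).aestronglyMeasurable
  · have hsinh : |sinh r| ≤ cosh r :=
      abs_le_of_sq_le_sq (by rw [cosh_sq]; linarith) (cosh_pos r).le
    rw [norm_div, norm_eq_abs, norm_of_nonneg (by positivity), ← div_eq_mul_inv, div_div,
      div_le_div_iff₀ (by positivity) (mul_pos (by positivity) (cosh_pos r))]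
    calc |sinh r| * (c ^ 2 * cosh r) ≤ cosh r * (c ^ 2 * cosh r) := by gcongr
      _ = c ^ 2 * (1 + sinh r ^ 2) := by linear_combination c ^ 2 * cosh_sq r
      _ ≤ (1 + c ^ 2) * (c ^ 2 + sinh r ^ 2) := by nlinarith [sq_nonneg (sinh r), sq_nonneg c]

lemma integrableOn_inv_sqrt_mul_struveDensity {c : ℝ} (hc : 0 < c) (s : ℝ) :
    IntegrableOn (fun w => (√(1 - w))⁻¹ * struveDensity (√w) c s) (Set.Ioo 0 1) := by
  refine IntegrableOn.congr_fun (((integrableOn_inv_sqrt_one_sub_mul hc s).mono_set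
    Set.Ioo_subset_Ioc_self).const_mul s) (fun w hw => ?_) measurableSet_Ioo
  simp only [struveDensity_sqrt hw.1.le, mul_left_comm]

lemma integral_inv_sqrt_mul_struveDensity {c : ℝ} (hc : 0 < c) (s : ℝ) :
    ∫ w in Set.Ioo 0 1, (√(1 - w))⁻¹ * struveDensity (√w) c s = 2 / c * (s / (c ^ 2 + s ^ 2)) := by
  have h : ∀ w ∈ Set.Ioo (0 : ℝ) 1, (√(1 - w))⁻¹ * struveDensity (√w) c s =
      s * ((√(1 - w))⁻¹ * (√(c ^ 2 + w * s ^ 2) ^ 3)⁻¹) := fun w hw => by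
    rw [struveDensity_sqrt hw.1.le, mul_left_comm]
  rw [setIntegral_congr_fun measurableSet_Ioo h, integral_const_mul,
    integral_inv_sqrt_one_sub_mul hc]
  field_simp

lemma integrable_prod_inv_sqrt_mul_struveDensity_smul_exp {μ : ℂ} (hμ : μ.re = 0) {c : ℝ}
    (hc : 0 < c) :
    Integrable (fun q : ℝ × ℝ => ((√(1 - q.1))⁻¹ * struveDensity (√q.1) c (sinh q.2)) •
        Complex.exp (-μ * q.2))
      ((volume.restrict (Set.Ioo 0 1)).prod (volume.restrict (Set.Ioi 0))) := by
  have hmeas : AEStronglyMeasurable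
      (fun q : ℝ × ℝ => ((√(1 - q.1))⁻¹ * struveDensity (√q.1) c (sinh q.2)) •
        Complex.exp (-μ * q.2))
      ((volume.restrict (Set.Ioo 0 1)).prod (volume.restrict (Set.Ioi 0))) :=
    Measurable.aestronglyMeasurable (by unfold struveDensity; fun_prop)
  rw [integrable_prod_iff' hmeas]
  refine ⟨.of_forall fun r =>
    (integrableOn_inv_sqrt_mul_struveDensity hc (sinh r)).smul_const (Complex.exp (-μ * r)), ?_⟩
  refine ((integrable_sinh_div hc).const_mul (2 / c)).integrableOn.congr ?_
  filter_upwards [ae_restrict_mem measurableSet_Ioi] with r (hr : 0 < r)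
  rw [← integral_inv_sqrt_mul_struveDensity hc]
  congr 1 with w
  rw [norm_smul, norm_exp_mul_ofReal_of_re_eq_zero (by simp [hμ]), mul_one, norm_of_nonneg
    (mul_nonneg (by positivity) (struveDensity_nonneg _ _ (sinh_pos_iff.mpr hr).le))]

lemma integrable_prod_struveKernel_smul_besselJ {μ : ℂ} (hμ : μ.re = 0) {c : ℝ} (hc : 0 < c) :
    Integrable (fun q : ℝ × ℝ =>
        (struveKernel q.1 c * arcsineWeight q.2) • besselJ μ (2 * q.1 * √q.2))
      ((volume.restrict (Set.Ioi 0)).prod (volume.restrict (Set.Ioo 0 1))) := by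
  have hmem : ∀ᵐ q : ℝ × ℝ ∂(volume.restrict (Set.Ioi 0)).prod (volume.restrict (Set.Ioo 0 1)),
      0 < q.1 ∧ 0 < q.2 := by
    filter_upwards [Measure.quasiMeasurePreserving_fst.ae (ae_restrict_mem measurableSet_Ioi),
      Measure.quasiMeasurePreserving_snd.ae (ae_restrict_mem measurableSet_Ioo)] with q hx hw
    exact ⟨hx, hw.1⟩
  refine ((integrableOn_struveKernel hc).mul_prod integrableOn_arcsineWeight).smul_bdd
    √(2 / ‖Complex.Gamma (μ + 1)‖ ^ 2) ?_ ?_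
  · rw [Measure.prod_restrict]
    refine ((continuousOn_besselJ μ).comp (f := fun q : ℝ × ℝ => 2 * q.1 * √q.2) (by fun_prop)
      ?_).aestronglyMeasurable (measurableSet_Ioi.prod measurableSet_Ioo)
    rintro q ⟨hx : 0 < q.1, hw⟩
    exact mul_pos (by positivity) (sqrt_pos.mpr hw.1)
  · filter_upwards [hmem] with q ⟨hx, hw⟩
    exact norm_besselJ_le hμ (by positivity)

lemma arcsineWeight_mul_sqrt {w : ℝ} (hw : 0 < w) : arcsineWeight w * √w = (√(1 - w))⁻¹ := by
  have hsqrt := (sqrt_pos.mpr hw).ne'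
  rw [arcsineWeight]
  field_simp

lemma integral_struveKernel_smul_besselJ_sq {ν : ℂ} (hν : ν.re = 0) {c : ℝ} (hc : 0 < c) :
    ∫ x in Set.Ioi 0, struveKernel x c • besselJ ν x ^ 2 = -(π ^ 2 * c)⁻¹ •
      ∫ r in Set.Ioi 0, (sinh r / (c ^ 2 + sinh r ^ 2)) • Complex.exp (-(2 * ν) * r) := by
  have hν' : (2 * ν).re = 0 := by simp [hν]
  have hproduct : ∀ x ∈ Set.Ioi (0 : ℝ), struveKernel x c • besselJ ν x ^ 2 =
      (π : ℂ)⁻¹ * ∫ w in Set.Ioo 0 1,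
        (struveKernel x c * arcsineWeight w) • besselJ (2 * ν) (2 * x * √w) := fun x hx => by
    simp only [besselJ_sq_eq_integral (by rw [hν]; norm_num) hx, mul_smul, integral_smul,
      mul_smul_comm]
  have hinner : ∀ w ∈ Set.Ioo (0 : ℝ) 1, ∫ x in Set.Ioi 0,
      (struveKernel x c * arcsineWeight w) • besselJ (2 * ν) (2 * x * √w) =
      -(2 * π)⁻¹ • ∫ r in Set.Ioi 0, ((√(1 - w))⁻¹ * struveDensity (√w) c (sinh r)) •
        Complex.exp (-(2 * ν) * r) := fun w hw => by
    simp only [mul_comm (struveKernel _ _), ← arcsineWeight_mul_sqrt hw.1, mul_smul, integral_smul,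
      integral_struveKernel_smul_besselJ hν' (sqrt_pos.mpr hw.1) hc]
    simp only [smul_smul]
    congr 1
    field_simp
  have houter (r : ℝ) : ∫ w in Set.Ioo 0 1,
      ((√(1 - w))⁻¹ * struveDensity (√w) c (sinh r)) • Complex.exp (-(2 * ν) * r) =
      (2 / c) • (sinh r / (c ^ 2 + sinh r ^ 2)) • Complex.exp (-(2 * ν) * r) := by
    rw [integral_smul_const, integral_inv_sqrt_mul_struveDensity hc, mul_smul]
  rw [setIntegral_congr_fun measurableSet_Ioi hproduct, integral_const_mul, integral_integral_swap
    (integrable_prod_struveKernel_smul_besselJ hν' hc), setIntegral_congr_fun measurableSet_Ioo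
    hinner, integral_smul, integral_integral_swap
    (integrable_prod_inv_sqrt_mul_struveDensity_smul_exp hν' hc)]
  simp only [houter, integral_smul]
  simp only [Complex.real_smul]
  push_cast
  field_simp

lemma integral_sinh_div_mul_sin (τ : ℝ) {u : ℝ} (hu : u ≠ 0) :
    ∫ r in Set.Ioi 0, sinh r / (cosh u ^ 2 + sinh r ^ 2) * sin (2 * τ * r) =
      π * sin (2 * τ * u) / (2 * (sinh u * cosh (π * τ))) := by
  have hτ : |(τ * I : ℂ).re| < 1 / 2 := by simp
  have him (r : ℝ) : ((sinh r / (cosh u ^ 2 + sinh r ^ 2)) •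
      Complex.exp (2 * (τ * I) * r)).im = sinh r / (cosh u ^ 2 + sinh r ^ 2) * sin (2 * τ * r) := by
    rw [Complex.smul_im, show 2 * (τ * I) * (r : ℂ) = (2 * τ * r : ℝ) * I by push_cast; ring,
      Complex.exp_ofReal_mul_I_im, smul_eq_mul]
  have heven (r : ℝ) : sinh |r| / (cosh u ^ 2 + sinh |r| ^ 2) * sin (2 * τ * |r|) =
      sinh r / (cosh u ^ 2 + sinh r ^ 2) * sin (2 * τ * r) := by
    rcases abs_choice r with h | h <;> simp [h, neg_div]
  have hhalf := integral_comp_abs (f := fun r =>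
    sinh r / (cosh u ^ 2 + sinh r ^ 2) * sin (2 * τ * r))
  have hline := congrArg Complex.im (integral_sinh_div_smul_exp hτ hu)
  have hvalue : π * Complex.sinh (2 * (τ * I) * u) / (sinh u * Complex.cos (π * (τ * I))) =
      (π * sin (2 * τ * u) / (sinh u * cosh (π * τ)) : ℝ) * I := by
    rw [show 2 * (τ * I) * (u : ℂ) = (2 * τ * u) * I by ring, Complex.sinh_mul_I,
      ← mul_assoc (π : ℂ) τ I, Complex.cos_mul_I]
    push_cast
    ring
  rw [hvalue, Complex.im_ofReal_mul, Complex.I_im, mul_one, ← RCLike.im_eq_complex_im,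
    ← integral_im (integrable_sinh_div_smul_exp hτ hu)] at hline
  simp only [heven, RCLike.im_eq_complex_im, him] at hhalf hline
  rw [hline] at hhalf
  field_simp at hhalf ⊢
  exact hhalf.symm

lemma integrableOn_struveKernel_smul_besselJ_sq {ν : ℂ} (hν : ν.re = 0) {c : ℝ} (hc : 0 < c) :
    IntegrableOn (fun x => struveKernel x c • besselJ ν x ^ 2) (Set.Ioi 0) := by
  refine (integrableOn_struveKernel hc).smul_bdd (2 / ‖Complex.Gamma (ν + 1)‖ ^ 2)
    (((continuousOn_besselJ ν).pow 2).aestronglyMeasurable measurableSet_Ioi) ?_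
  filter_upwards [ae_restrict_mem measurableSet_Ioi] with x hx
  rw [norm_pow]
  exact norm_besselJ_sq_le hν hx

lemma integral_struveKernel_mul_im_besselJ_sq (τ : ℝ) {u : ℝ} (hu : u ≠ 0) :
    ∫ x in Set.Ioi 0, struveKernel x (cosh u) * (besselJ (τ * I) x ^ 2).im =
      sin (2 * τ * u) / (2 * π * cosh u * sinh u * cosh (π * τ)) := by
  have hτ : (τ * I : ℂ).re = 0 := by simp
  have hexp : Integrable (fun r : ℝ => (sinh r / (cosh u ^ 2 + sinh r ^ 2)) •
      Complex.exp (-(2 * (τ * I)) * r)) := by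
    simpa only [mul_neg] using integrable_sinh_div_smul_exp (ν := -(τ * I)) (by simp) hu
  have him (r : ℝ) : ((sinh r / (cosh u ^ 2 + sinh r ^ 2)) •
      Complex.exp (-(2 * (τ * I)) * r)).im =
      -(sinh r / (cosh u ^ 2 + sinh r ^ 2) * sin (2 * τ * r)) := by
    rw [Complex.smul_im, show -(2 * (τ * I)) * (r : ℂ) = (-(2 * τ * r) : ℝ) * I by push_cast; ring,
      Complex.exp_ofReal_mul_I_im, sin_neg, smul_eq_mul, mul_neg]
  have h := congrArg Complex.im (integral_struveKernel_smul_besselJ_sq hτ (cosh_pos u))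
  rw [Complex.smul_im, ← RCLike.im_eq_complex_im, ← integral_im
    (integrableOn_struveKernel_smul_besselJ_sq hτ (cosh_pos u)),
    ← integral_im hexp.integrableOn] at h
  simp only [RCLike.im_eq_complex_im, him, Complex.smul_im, smul_eq_mul, integral_neg,
    integral_sinh_div_mul_sin τ hu] at h
  rw [h]
  field_simp

/-! ### Orthogonality -/

lemma norm_Gamma_ofReal_mul_I_add_one_sq {τ : ℝ} (hτ : τ ≠ 0) :
    ‖Complex.Gamma (τ * I + 1)‖ ^ 2 = π * τ / sinh (π * τ) := by
  have hτI : (τ : ℂ) * I ≠ 0 := mul_ne_zero (Complex.ofReal_ne_zero.mpr hτ) Complex.I_ne_zero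
  have hconj : (starRingEnd ℂ) (Complex.Gamma (τ * I + 1)) = Complex.Gamma (1 - τ * I) := by
    rw [← Complex.Gamma_conj]
    congr 1
    simp [add_comm, sub_eq_add_neg]
  have h : ((‖Complex.Gamma (τ * I + 1)‖ ^ 2 : ℝ) : ℂ) = (π * τ / sinh (π * τ) : ℝ) := by
    push_cast
    rw [← Complex.mul_conj', hconj, Complex.Gamma_add_one _ hτI, mul_assoc,
      Complex.Gamma_mul_Gamma_one_sub, ← mul_assoc (π : ℂ), Complex.sin_mul_I]
    field_simp [Complex.I_ne_zero]
  exact_mod_cast h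

/-- The function `Im (J_{iτ}(x)²) / sinh (πτ)`, in which `f` is expanded with `τ = n / 2`. -/
noncomputable def imBesselSq (τ x : ℝ) : ℝ := (besselJ (τ * I) x ^ 2).im / sinh (π * τ)

lemma abs_imBesselSq_le {τ x : ℝ} (hτ : 0 < τ) (hx : 0 < x) : |imBesselSq τ x| ≤ 2 / (π * τ) := by
  have hsinh : 0 < sinh (π * τ) := sinh_pos_iff.mpr (by positivity)
  have h := norm_besselJ_sq_le (ν := τ * I) (by simp) hx
  rw [norm_Gamma_ofReal_mul_I_add_one_sq hτ.ne', div_div_eq_mul_div, ← norm_pow] at h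
  rw [imBesselSq, abs_div, abs_of_pos hsinh, div_le_iff₀ hsinh, div_mul_eq_mul_div]
  exact (Complex.abs_im_le_norm _).trans h

lemma continuousOn_imBesselSq (τ : ℝ) : ContinuousOn (imBesselSq τ) (Set.Ioi 0) :=
  (Complex.continuous_im.comp_continuousOn ((continuousOn_besselJ _).pow 2)).div_const _

lemma integral_struveKernel_mul_imBesselSq (τ : ℝ) {u : ℝ} (hu : u ≠ 0) :
    ∫ x in Set.Ioi 0, struveKernel x (cosh u) * imBesselSq τ x =
      2 / (π * sinh (2 * π * τ)) * (sin (2 * τ * u) / sinh (2 * u)) := by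
  simp only [imBesselSq, ← mul_div_assoc, integral_div,
    integral_struveKernel_mul_im_besselJ_sq τ hu]
  rw [mul_assoc 2 π τ, sinh_two_mul, sinh_two_mul]
  field_simp

/-- The function `Ω_n` of the theorem, for a real frequency `n = ω`. -/
noncomputable def struveSineTransform (ω x : ℝ) : ℝ :=
  ∫ u in Set.Ioc 0 π, struveKernel x (cosh u) * sinh (2 * u) * sin (ω * u)

lemma integrable_prod_struveKernel_mul_sin (ω : ℝ) :
    Integrable (fun q : ℝ × ℝ => struveKernel q.1 (cosh q.2) * sinh (2 * q.2) * sin (ω * q.2))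
      ((volume.restrict (Set.Ioi 0)).prod (volume.restrict (Set.Ioc 0 π))) := by
  have hsinh : IntegrableOn (fun u => sinh (2 * u)) (Set.Ioc 0 π) :=
    (Continuous.integrableOn_Icc (by fun_prop)).mono_set Set.Ioc_subset_Icc_self
  refine ((integrableOn_struveKernel one_pos).norm.mul_prod hsinh.norm).mono' ?_ ?_
  · have hkernel : Measurable fun q : ℝ × ℝ => struveKernel q.1 (cosh q.2) :=
      measurable_struveKernel.comp (f := fun q : ℝ × ℝ => (q.1, cosh q.2)) (by fun_prop)
    exact Measurable.aestronglyMeasurable (by fun_prop)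
  · filter_upwards [Measure.quasiMeasurePreserving_fst.ae (ae_restrict_mem measurableSet_Ioi)]
      with q (hx : 0 < q.1)
    rw [norm_mul, norm_mul]
    calc ‖struveKernel q.1 (cosh q.2)‖ * ‖sinh (2 * q.2)‖ * ‖sin (ω * q.2)‖
        ≤ ‖struveKernel q.1 1‖ * ‖sinh (2 * q.2)‖ * 1 := by
          gcongr
          · exact abs_struveKernel_anti one_pos (one_le_cosh _) hx
          · exact abs_sin_le_one _
      _ = _ := mul_one _

lemma integrableOn_struveSineTransform (ω : ℝ) :
    IntegrableOn (struveSineTransform ω) (Set.Ioi 0) :=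
  (integrable_prod_struveKernel_mul_sin ω).integral_prod_left

lemma integral_struveSineTransform_mul_imBesselSq (ω : ℝ) {τ : ℝ} (hτ : 0 < τ) :
    ∫ x in Set.Ioi 0, struveSineTransform ω x * imBesselSq τ x =
      2 / (π * sinh (2 * π * τ)) * ∫ u in (0)..π, sin (2 * τ * u) * sin (ω * u) := by
  have hprod : Integrable (fun q : ℝ × ℝ =>
      struveKernel q.1 (cosh q.2) * sinh (2 * q.2) * sin (ω * q.2) * imBesselSq τ q.1)
      ((volume.restrict (Set.Ioi 0)).prod (volume.restrict (Set.Ioc 0 π))) := by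
    refine (integrable_prod_struveKernel_mul_sin ω).mul_bdd (c := 2 / (π * τ))
      ((continuousOn_imBesselSq τ).aestronglyMeasurable measurableSet_Ioi).comp_fst ?_
    filter_upwards [Measure.quasiMeasurePreserving_fst.ae (ae_restrict_mem measurableSet_Ioi)]
      with q hx
    exact abs_imBesselSq_le hτ hx
  have hinner : ∀ u ∈ Set.Ioc 0 π, ∫ x in Set.Ioi 0,
      struveKernel x (cosh u) * sinh (2 * u) * sin (ω * u) * imBesselSq τ x =
      2 / (π * sinh (2 * π * τ)) * (sin (2 * τ * u) * sin (ω * u)) := fun u hu => by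
    have hsinh : sinh (2 * u) ≠ 0 := sinh_ne_zero.mpr (mul_pos two_pos hu.1).ne'
    have hcomm (x : ℝ) : struveKernel x (cosh u) * sinh (2 * u) * sin (ω * u) * imBesselSq τ x =
      sinh (2 * u) * sin (ω * u) * (struveKernel x (cosh u) * imBesselSq τ x) := by ring
    simp only [hcomm, integral_const_mul, integral_struveKernel_mul_imBesselSq τ hu.1.ne']
    field_simp
  simp only [struveSineTransform, ← integral_mul_const]
  rw [integral_integral_swap hprod, setIntegral_congr_fun measurableSet_Ioc hinner,
    integral_const_mul, intervalIntegral.integral_of_le pi_pos.le]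

lemma integral_cos_int_mul {j : ℤ} (hj : j ≠ 0) : ∫ u in (0)..π, cos (j * u) = 0 := by
  rw [intervalIntegral.integral_comp_mul_left _ (Int.cast_ne_zero.mpr hj), integral_cos,
    sin_int_mul_pi, mul_zero, sin_zero, sub_zero, smul_zero]

lemma integral_sin_nat_mul_sin_nat_mul (m : ℕ) {n : ℕ} (hn : n ≠ 0) :
    ∫ u in (0)..π, sin (m * u) * sin (n * u) = if m = n then π / 2 else 0 := by
  have hproduct (u : ℝ) : sin (m * u) * sin (n * u) =
      (cos ((m - n : ℤ) * u) - cos ((m + n : ℤ) * u)) / 2 := by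
    push_cast
    rw [sub_mul, add_mul, cos_sub, cos_add]
    ring
  simp only [hproduct, intervalIntegral.integral_div]
  rw [intervalIntegral.integral_sub (Continuous.intervalIntegrable (by fun_prop) _ _)
    (Continuous.intervalIntegrable (by fun_prop) _ _),
    integral_cos_int_mul (j := m + n) (by omega), sub_zero]
  split_ifs with h
  · simp [h]
  · rw [integral_cos_int_mul (sub_ne_zero.mpr (by exact_mod_cast h)), zero_div]

lemma integral_struveSineTransform_mul_imBesselSq_half {m n : ℕ} (hm : 0 < m) (hn : n ≠ 0) :
    ∫ x in Set.Ioi 0, struveSineTransform n x * imBesselSq (m / 2) x =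
      if m = n then (sinh (π * n))⁻¹ else 0 := by
  rw [integral_struveSineTransform_mul_imBesselSq n (by positivity), mul_div_cancel₀ _ two_ne_zero,
    integral_sin_nat_mul_sin_nat_mul m hn, show 2 * π * ((m : ℝ) / 2) = π * m by ring]
  split_ifs with h
  · subst h
    field_simp
  · rw [mul_zero]

/-! ### Integration of series term by term -/

section Series

variable {α ι 𝕜 : Type*} [MeasurableSpace α] {μ : Measure α} [Countable ι] [RCLike 𝕜]
  {g f : α → 𝕜} {F : ι → α → 𝕜} {C : ι → ℝ}

lemma integrable_mul_of_hasSum (hg : Integrable g μ) (hF : ∀ i, AEStronglyMeasurable (F i) μ)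
    (hC : Summable C) (hFC : ∀ᵐ x ∂μ, ∀ i, ‖F i x‖ ≤ C i)
    (hf : ∀ᵐ x ∂μ, HasSum (fun i => F i x) (f x)) : Integrable (fun x => g x * f x) μ := by
  have hmeas : AEStronglyMeasurable f μ := aestronglyMeasurable_of_tendsto_ae atTop
    (fun s => s.aestronglyMeasurable_fun_sum fun i _ => hF i) hf
  refine hg.mul_bdd (c := ∑' i, C i) hmeas ?_
  filter_upwards [hFC, hf] with x hxC hx
  exact hx.tsum_eq ▸ tsum_of_norm_bounded hC.hasSum hxC

lemma hasSum_integral_mul_of_hasSum (hg : Integrable g μ)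
    (hF : ∀ i, AEStronglyMeasurable (F i) μ) (hC : Summable C)
    (hFC : ∀ᵐ x ∂μ, ∀ i, ‖F i x‖ ≤ C i) (hf : ∀ᵐ x ∂μ, HasSum (fun i => F i x) (f x)) :
    HasSum (fun i => ∫ x, g x * F i x ∂μ) (∫ x, g x * f x ∂μ) := by
  refine hasSum_integral_of_dominated_convergence (fun i x => ‖g x‖ * C i)
    (fun i => hg.aestronglyMeasurable.mul (hF i)) (fun i => ?_)
    (.of_forall fun x => hC.mul_left _) ?_ (hf.mono fun x hx => hx.mul_left _)
  · filter_upwards [hFC] with x hx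
    rw [norm_mul]
    exact mul_le_mul_of_nonneg_left (hx i) (norm_nonneg _)
  · simp only [tsum_mul_left]
    exact hg.norm.mul_const _

end Series

/-! ### Coefficients of the series -/

lemma div_sinh_mul_im_besselJ_sq (z : ℂ) (n : ℕ) (x : ℝ) :
    z / (sinh (π * (n + 1) / 2) : ℂ) * ((besselJ (I * (n + 1) / 2) x ^ 2).im : ℂ) =
      z * (imBesselSq ((n + 1 : ℕ) / 2) x : ℂ) := by
  have horder : I * (n + 1) / 2 = (((n + 1 : ℕ) / 2 : ℝ) : ℂ) * I := by push_cast; ring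
  rw [horder, imBesselSq, ← mul_div_assoc π]
  push_cast
  ring

lemma norm_mul_imBesselSq_le (z : ℂ) (n : ℕ) {x : ℝ} (hx : 0 < x) :
    ‖z * (imBesselSq ((n + 1 : ℕ) / 2) x : ℂ)‖ ≤ 4 / π * (‖z‖ / (n + 1)) := by
  have h := abs_imBesselSq_le (τ := (n + 1 : ℕ) / 2) (by positivity) hx
  rw [norm_mul, Complex.norm_real, norm_eq_abs]
  calc ‖z‖ * |imBesselSq ((n + 1 : ℕ) / 2) x| ≤ ‖z‖ * (2 / (π * ((n + 1 : ℕ) / 2))) := by gcongr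
    _ = 4 / π * (‖z‖ / (n + 1)) := by push_cast; field_simp; norm_num

lemma aestronglyMeasurable_mul_imBesselSq (z : ℂ) (τ : ℝ) :
    AEStronglyMeasurable (fun x => z * (imBesselSq τ x : ℂ)) (volume.restrict (Set.Ioi 0)) :=
  (continuousOn_const.mul (Complex.continuous_ofReal.comp_continuousOn
    (continuousOn_imBesselSq τ))).aestronglyMeasurable measurableSet_Ioi

lemma integral_struveSineTransform_mul_const_mul_imBesselSq (z : ℂ) {m n : ℕ} (hm : 0 < m)
    (hn : n ≠ 0) :
    ∫ x in Set.Ioi 0, (struveSineTransform n x : ℂ) * (z * (imBesselSq (m / 2) x : ℂ)) =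
      if m = n then z / (sinh (π * n) : ℝ) else 0 := by
  simp only [mul_left_comm _ z, ← Complex.ofReal_mul]
  rw [integral_const_mul, integral_complex_ofReal,
    integral_struveSineTransform_mul_imBesselSq_half hm hn]
  split_ifs <;> simp [div_eq_mul_inv]

section ImBesselSqSeries

variable {c : ℕ → ℂ} {f : ℝ → ℂ}

lemma integrableOn_struveSineTransform_mul_of_hasSum (hc : Summable fun n => ‖c n‖ / (n + 1))
    (hf : ∀ x, 0 < x → HasSum (fun n => c n * (imBesselSq ((n + 1 : ℕ) / 2) x : ℂ)) (f x)) (ω : ℝ) :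
    IntegrableOn (fun x => (struveSineTransform ω x : ℂ) * f x) (Set.Ioi 0) :=
  integrable_mul_of_hasSum (integrableOn_struveSineTransform ω).ofReal
    (fun n => aestronglyMeasurable_mul_imBesselSq (c n) _) (hc.mul_left (4 / π))
    ((ae_restrict_mem measurableSet_Ioi).mono fun _ hx n => norm_mul_imBesselSq_le (c n) n hx)
    ((ae_restrict_mem measurableSet_Ioi).mono hf)

lemma integral_struveSineTransform_mul_of_hasSum (hc : Summable fun n => ‖c n‖ / (n + 1))
    (hf : ∀ x, 0 < x → HasSum (fun n => c n * (imBesselSq ((n + 1 : ℕ) / 2) x : ℂ)) (f x)) (n : ℕ) :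
    ∫ x in Set.Ioi 0, (struveSineTransform (n + 1 : ℕ) x : ℂ) * f x =
      c n / (sinh (π * (n + 1 : ℕ)) : ℝ) := by
  have hsum := hasSum_integral_mul_of_hasSum
    (integrableOn_struveSineTransform (n + 1 : ℕ)).ofReal
    (fun m => aestronglyMeasurable_mul_imBesselSq (c m) _) (hc.mul_left (4 / π))
    ((ae_restrict_mem measurableSet_Ioi).mono fun _ hx m => norm_mul_imBesselSq_le (c m) m hx)
    ((ae_restrict_mem measurableSet_Ioi).mono hf)
  have hint (m : ℕ) := integral_struveSineTransform_mul_const_mul_imBesselSq (c m) m.succ_pos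
    n.succ_ne_zero
  refine (hsum.unique (hasSum_single n fun m hmn => ?_)).trans ((hint n).trans (if_pos rfl))
  exact (hint m).trans (if_neg (by simpa using hmn))

end ImBesselSqSeries

theorem statement4_general (a : ℕ → ℂ) (ha : Summable fun n : ℕ => ‖a (n + 1)‖ / (n + 1))
    (f : ℝ → ℂ)
    (hf : ∀ x : ℝ, 0 < x → f x = ∑' n : ℕ,
      a (n + 1) / (sinh (π * (n + 1) / 2) : ℂ) * ((besselJ (I * (n + 1) / 2) x ^ 2).im : ℂ))
    (Ω : ℕ → ℝ → ℝ)
    (hΩ : ∀ (n : ℕ) (x : ℝ), Ω n x = ∫ u in (0 : ℝ)..π,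
      (x * struveK0 (2 * x * cosh u) - 1 / (π * cosh u)) * sinh (2 * u) * sin (n * u)) :
    (∀ x : ℝ, 0 < x → Summable fun n : ℕ => ‖a (n + 1) / (sinh (π * (n + 1) / 2) : ℂ) *
      ((besselJ (I * (n + 1) / 2) x ^ 2).im : ℂ)‖) ∧
    ∀ n : ℕ, 1 ≤ n →
      IntegrableOn (fun x : ℝ => (Ω n x : ℂ) * f x) (Set.Ioi 0) ∧
      a n = (sinh (π * n) : ℂ) * ∫ x in Set.Ioi (0 : ℝ), (Ω n x : ℂ) * f x := by
  simp_rw [div_sinh_mul_im_besselJ_sq] at hf ⊢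
  have hsummable (x : ℝ) (hx : 0 < x) : Summable fun n : ℕ =>
      ‖a (n + 1) * (imBesselSq ((n + 1 : ℕ) / 2) x : ℂ)‖ :=
    .of_nonneg_of_le (fun _ => norm_nonneg _)
      (fun n => norm_mul_imBesselSq_le (a (n + 1)) n hx) (ha.mul_left (4 / π))
  have hseries (x : ℝ) (hx : 0 < x) :
      HasSum (fun n : ℕ => a (n + 1) * (imBesselSq ((n + 1 : ℕ) / 2) x : ℂ)) (f x) :=
    hf x hx ▸ (hsummable x hx).of_norm.hasSum
  have hΩ_eq (n : ℕ) : Ω n = struveSineTransform n := funext fun x =>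
    (hΩ n x).trans (intervalIntegral.integral_of_le pi_pos.le)
  refine ⟨hsummable, fun n hn => ?_⟩
  obtain ⟨m, rfl⟩ := Nat.exists_eq_add_of_le' hn
  have hsinh : sinh (π * (m + 1 : ℕ)) ≠ 0 := (sinh_pos_iff.mpr (by positivity)).ne'
  rw [hΩ_eq, integral_struveSineTransform_mul_of_hasSum ha hseries,
    mul_div_cancel₀ _ (Complex.ofReal_ne_zero.mpr hsinh)]
  exact ⟨integrableOn_struveSineTransform_mul_of_hasSum ha hseries _, rfl⟩

end

theorem statement4 (a : ℕ → ℂ) (ha : Summable fun n : ℕ => ‖a (n + 1)‖)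
    (f : ℝ → ℂ)
    (hf : ∀ x : ℝ, 0 < x → f x = ∑' n : ℕ,
      a (n + 1) / (Real.sinh (Real.pi * (n + 1) / 2) : ℂ) *
        ((((besselJ (Complex.I * (n + 1) / 2) x) ^ 2).im : ℂ)))
    (Ω : ℕ → ℝ → ℝ)
    (hΩ : ∀ (n : ℕ) (x : ℝ), Ω n x = ∫ u in (0 : ℝ)..Real.pi,
      (x * struveK0 (2 * x * Real.cosh u) - 1 / (Real.pi * Real.cosh u)) *
        Real.sinh (2 * u) * Real.sin (n * u)) :
    (∀ x : ℝ, 0 < x → Summable fun n : ℕ => ‖a (n + 1) / (Real.sinh (Real.pi * (n + 1) / 2) : ℂ) *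
      ((((besselJ (Complex.I * (n + 1) / 2) x) ^ 2).im : ℂ))‖) ∧
    ∀ n : ℕ, 1 ≤ n →
      IntegrableOn (fun x : ℝ => (Ω n x : ℂ) * f x) (Set.Ioi (0 : ℝ)) ∧
      a n = ((Real.sinh (Real.pi * n) : ℝ) : ℂ) * ∫ x in Set.Ioi (0 : ℝ), (Ω n x : ℂ) * f x := by
  exact statement4_general a (ha.of_nonneg_of_le (fun _ => by positivity)
    fun n => div_le_self (norm_nonneg _) (by simp)) f hf Ω hΩ
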